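/- arXiv:2201.01043 — 4 statements merged into one kernel-verified Lean document; each statement's English description precedes it below -/
import Mathlib

section
/- Let G be a connected K_{1,4}-free finite simple graph and let T be a spanning tree of G that has the minimum number of leaves among all spanning trees of G, and suppose B(T) ≠ ∅. Then L(T) is pseudoindependent with respect to T, i.e., no two leaves of T are both oblique neighbors of a common edge of T. -/
open SimpleGraph Finset List

open scoped Classical

variable {V : Type*}

/-- `G` contains no induced copy of `K_{1,4}` (a star with four edges). -/
def K14Free (G : SimpleGraph V) : Prop :=
  ¬ ∃ c a b d e : V, a ≠ b ∧ a ≠ d ∧ a ≠ e ∧ b ≠ d ∧ b ≠ e ∧ d ≠ e ∧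
    G.Adj c a ∧ G.Adj c b ∧ G.Adj c d ∧ G.Adj c e ∧
    ¬G.Adj a b ∧ ¬G.Adj a d ∧ ¬G.Adj a e ∧ ¬G.Adj b d ∧ ¬G.Adj b e ∧ ¬G.Adj d e

/-- `s` is an independent set of vertices of `G`. -/
def IsIndepFinset (G : SimpleGraph V) (s : Finset V) : Prop :=
  ∀ u ∈ s, ∀ v ∈ s, u ≠ v → ¬G.Adj u v

/-- The set `L(T)` of leaves (vertices of degree one) of `T`. -/
noncomputable def leafSet [Fintype V] (T : SimpleGraph V) : Finset V :=
  Finset.univ.filter fun v => T.degree v = 1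

/-- The set `B(T)` of branch vertices (vertices of degree at least three) of `T`. -/
noncomputable def branchSet [Fintype V] (T : SimpleGraph V) : Finset V :=
  Finset.univ.filter fun v => 3 ≤ T.degree v

/-- `v` is an oblique neighbor of the edge `e` with respect to the (spanning) tree `T` of `G`:
`e = s(a,b)` where `b` is the endpoint of `e` farthest from `v` in `T`, and `v b ∈ E(G)`. -/
def IsObliqueNbr (G T : SimpleGraph V) (e : Sym2 V) (v : V) : Prop :=
  ∃ a b : V, e = s(a, b) ∧ T.dist v a < T.dist v b ∧ G.Adj v b

/-- The number of vertices of the reducible stem `R_Stem(T)` of `T`: a vertex `v` survives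
iff for every leaf `x` of `T` the (unique) path of `T` from `x` to `v` contains a branch
vertex (so exactly the vertices not lying strictly before the first branch vertex on the
path leaving some leaf). -/
noncomputable def rstemCard [Fintype V] (T : SimpleGraph V) : ℕ :=
  {v : V | ∀ x : V, T.degree x = 1 → ∀ p : T.Walk x v, p.IsPath →
    ∃ w ∈ p.support, 3 ≤ T.degree w}.ncard

namespace Stmt13Aux

/-- `T - xy + uv`. -/
def swap (T : SimpleGraph V) (x y u v : V) : SimpleGraph V where
  Adj a b := (T.Adj a b ∧ ¬ (a = x ∧ b = y) ∧ ¬ (a = y ∧ b = x)) ∨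
    (a ≠ b ∧ ((a = u ∧ b = v) ∨ (a = v ∧ b = u)))
  symm := ⟨by
    intro a b h
    rcases h with ⟨h, h1, h2⟩ | ⟨h, h1⟩
    · exact Or.inl ⟨h.symm, by tauto, by tauto⟩
    · exact Or.inr ⟨h.symm, by tauto⟩⟩
  loopless := ⟨by
    intro a h
    rcases h with ⟨h, -, -⟩ | ⟨h, -⟩
    · exact T.loopless.irrefl a h
    · exact h rfl⟩

lemma swap_adj {T : SimpleGraph V} {x y u v a b : V} : (swap T x y u v).Adj a b ↔
    (T.Adj a b ∧ ¬ (a = x ∧ b = y) ∧ ¬ (a = y ∧ b = x)) ∨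
    (a ≠ b ∧ ((a = u ∧ b = v) ∨ (a = v ∧ b = u))) := Iff.rfl

/-- `s` lies on the side of `x` of the edge `xy`. -/
def Side (T : SimpleGraph V) (s x y : V) : Prop := ∃ p : T.Walk s x, y ∉ p.support

lemma exists_walk_swap {T : SimpleGraph V} {x y u v a b z : V} (p : T.Walk a b)
    (hz : z = x ∨ z = y) (h : z ∉ p.support) :
    ∃ q : (swap T x y u v).Walk a b, q.support = p.support := by
  induction p with
  | nil => exact ⟨Walk.nil, rfl⟩
  | @cons a c b hac p ih =>
    rw [Walk.support_cons, List.mem_cons, not_or] at h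
    obtain ⟨q, hq⟩ := ih h.2
    have hc : z ≠ c := fun e => h.2 (e ▸ p.start_mem_support)
    refine ⟨Walk.cons (swap_adj.2 (Or.inl ⟨hac, ?_, ?_⟩)) q, by rw [Walk.support_cons, Walk.support_cons, hq]⟩ <;>
      · rintro ⟨rfl, rfl⟩
        rcases hz with rfl | rfl
        · first | exact h.1 rfl | exact hc rfl
        · first | exact h.1 rfl | exact hc rfl

lemma swap_isTree [Fintype V] {T : SimpleGraph V} (hT : T.IsTree) {x y u v : V}
    (hxy : T.Adj x y) (huv : u ≠ v) (hu : Side T u x y) (hv : Side T v y x) :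
    (swap T x y u v).IsTree := by
  obtain ⟨p, hp⟩ := hu
  obtain ⟨q, hq⟩ := hv
  obtain ⟨p', -⟩ := exists_walk_swap (u := u) (v := v) p (Or.inr rfl) hp
  obtain ⟨q', -⟩ := exists_walk_swap (u := u) (v := v) q (Or.inl rfl) hq
  have hxy' : (swap T x y u v).Reachable x y := by
    have h1 : (swap T x y u v).Adj u v := Or.inr ⟨huv, Or.inl ⟨rfl, rfl⟩⟩
    exact p'.reachable.symm.trans (h1.reachable.trans q'.reachable)
  have hreach : ∀ a b, T.Adj a b → (swap T x y u v).Reachable a b := by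
    intro a b hab
    by_cases h1 : a = x ∧ b = y
    · rw [h1.1, h1.2]; exact hxy'
    by_cases h2 : a = y ∧ b = x
    · rw [h2.1, h2.2]; exact hxy'.symm
    have : (swap T x y u v).Adj a b := Or.inl ⟨hab, h1, h2⟩
    exact this.reachable
  have hconn : (swap T x y u v).Connected := by
    have := hT.1.nonempty
    refine ⟨fun a b => ?_⟩
    obtain ⟨w⟩ := hT.1 a b
    induction w with
    | nil => exact Reachable.refl _
    | cons h _ ih => exact (hreach _ _ h).trans ih
  rw [isTree_iff_connected_and_card]
  refine ⟨hconn, le_antisymm ?_ hconn.card_vert_le_card_edgeSet_add_one⟩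
  rw [← (isTree_iff_connected_and_card.1 hT).2]
  have hsub : (swap T x y u v).edgeSet ⊆ insert s(u, v) (T.edgeSet \ {s(x, y)}) := by
    intro e
    induction e with
    | h a b =>
      intro h
      rcases h with ⟨h, h1, h2⟩ | ⟨h, h1⟩
      · right
        refine ⟨h, ?_⟩
        simp only [Set.mem_singleton_iff, Sym2.eq_iff]
        tauto
      · left
        simp only [Sym2.eq_iff]
        tauto
  have h1 := Set.ncard_le_ncard hsub (Set.toFinite _)
  have h2 := Set.ncard_insert_le s(u, v) (T.edgeSet \ {s(x, y)})
  have h3 := Set.ncard_sdiff_singleton_add_one (s := T.edgeSet) (a := s(x, y)) hxy (Set.toFinite _)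
  rw [Nat.card_coe_set_eq, Nat.card_coe_set_eq]
  omega

lemma leaf_unique [Fintype V] {T : SimpleGraph V} {s a b : V} (hs : T.degree s = 1)
    (ha : T.Adj s a) (hb : T.Adj s b) : a = b := by
  rw [← card_neighborFinset_eq_degree, Finset.card_eq_one] at hs
  obtain ⟨c, hc⟩ := hs
  have h1 : a ∈ T.neighborFinset s := by simpa using ha
  have h2 : b ∈ T.neighborFinset s := by simpa using hb
  rw [hc, Finset.mem_singleton] at h1 h2
  rw [h1, h2]

lemma leaf_not_adj [Fintype V] {T : SimpleGraph V} {s x y : V} (hs : T.degree s = 1)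
    (p : T.Walk s x) (hsx : s ≠ x) (hp : y ∉ p.support) : ¬ T.Adj s y := by
  intro h
  cases p with
  | nil => exact hsx rfl
  | cons h' p =>
    rw [leaf_unique hs h h'] at hp
    simp at hp

/-- A spanning tree of `G` with the minimum number of leaves, having a branch vertex. -/
structure Good [Fintype V] (G T : SimpleGraph V) : Prop where
  le : T ≤ G
  tree : T.IsTree
  min : ∀ T' : SimpleGraph V, T' ≤ G → T'.IsTree → (leafSet T).card ≤ (leafSet T').card
  branch : ∃ b, 3 ≤ T.degree b

lemma swap_le {G T : SimpleGraph V} (h : T ≤ G) {x y u v : V} (huv : G.Adj u v) :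
    swap T x y u v ≤ G := by
  intro a b hab
  rcases hab with ⟨h1, -, -⟩ | ⟨-, ⟨rfl, rfl⟩ | ⟨rfl, rfl⟩⟩
  · exact h h1
  · exact huv
  · exact huv.symm

lemma mem_leafSet [Fintype V] {T : SimpleGraph V} {v : V} : v ∈ leafSet T ↔ T.degree v = 1 := by
  simp [leafSet]

lemma lemmaA [Fintype V] {G T : SimpleGraph V} (hg : Good G T) {s x y : V}
    (hs : T.degree s = 1) (hxy : T.Adj x y) (hside : Side T s x y) (hsx : s ≠ x)
    (hsy : G.Adj s y) :
    Good G (swap T x y s y) ∧ T.degree x = 2 ∧ (swap T x y s y).degree x = 1 ∧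
      ∀ w, w ≠ s → w ≠ x → (swap T x y s y).degree w = T.degree w := by
  have hTree : (swap T x y s y).IsTree :=
    swap_isTree hg.tree hxy hsy.ne hside ⟨Walk.nil, by simpa using hxy.ne⟩
  have hle : swap T x y s y ≤ G := swap_le hg.le hsy
  have hsy' : s ≠ y := hsy.ne
  have hxy' : x ≠ y := hxy.ne
  obtain ⟨p, hp⟩ := hside
  have hnadj : ¬ T.Adj s y := leaf_not_adj hs p hsx hp
  have hdx : (swap T x y s y).degree x + 1 = T.degree x := by
    have : (swap T x y s y).neighborFinset x = (T.neighborFinset x).erase y := by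
      ext a
      simp only [mem_neighborFinset, Finset.mem_erase, swap_adj]
      grind
    rw [← card_neighborFinset_eq_degree, ← card_neighborFinset_eq_degree, this,
      Finset.card_erase_add_one]
    simpa using hxy
  have hds : (swap T x y s y).degree s = 2 := by
    have : (swap T x y s y).neighborFinset s = insert y (T.neighborFinset s) := by
      ext a
      simp only [mem_neighborFinset, Finset.mem_insert, swap_adj]
      grind
    rw [← card_neighborFinset_eq_degree, this, Finset.card_insert_of_notMem (by simpa using hnadj),
      card_neighborFinset_eq_degree, hs]
  have hdw : ∀ w, w ≠ s → w ≠ x → (swap T x y s y).degree w = T.degree w := by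
    intro w h1 h2
    by_cases h3 : w = y
    · subst h3
      have : (swap T x w s w).neighborFinset w = insert s ((T.neighborFinset w).erase x) := by
        ext a
        simp only [mem_neighborFinset, Finset.mem_insert, Finset.mem_erase, swap_adj]
        grind
      rw [← card_neighborFinset_eq_degree, this, Finset.card_insert_of_notMem,
        Finset.card_erase_add_one, card_neighborFinset_eq_degree]
      · simpa using hxy.symm
      · simp only [Finset.mem_erase, mem_neighborFinset]
        exact fun h => hnadj h.2.symm
    · have : (swap T x y s y).neighborFinset w = T.neighborFinset w := by
        ext a
        simp only [mem_neighborFinset, swap_adj]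
        grind
      rw [← card_neighborFinset_eq_degree, this, card_neighborFinset_eq_degree]
  have hsL : s ∈ leafSet T := mem_leafSet.2 hs
  have hx2 : T.degree x = 2 := by
    by_contra hne
    have hsub : leafSet (swap T x y s y) ⊆ (leafSet T).erase s := by
      intro w hw
      rw [mem_leafSet] at hw
      have h1 : w ≠ s := by rintro rfl; omega
      have h2 : w ≠ x := by rintro rfl; omega
      rw [Finset.mem_erase, mem_leafSet, ← hdw w h1 h2]
      exact ⟨h1, hw⟩
    have h1 := Finset.card_le_card hsub
    have h2 := Finset.card_erase_lt_of_mem hsL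
    have h3 := hg.min _ hle hTree
    omega
  have hsub : leafSet (swap T x y s y) ⊆ insert x ((leafSet T).erase s) := by
    intro w hw
    rw [mem_leafSet] at hw
    have h1 : w ≠ s := by rintro rfl; omega
    by_cases h2 : w = x
    · simp [h2]
    rw [Finset.mem_insert, Finset.mem_erase, mem_leafSet, ← hdw w h1 h2]
    exact Or.inr ⟨h1, hw⟩
  have hcard : (leafSet (swap T x y s y)).card ≤ (leafSet T).card := by
    refine (Finset.card_le_card hsub).trans ((Finset.card_insert_le _ _).trans ?_)
    rw [Finset.card_erase_add_one hsL]
  refine ⟨⟨hle, hTree, fun T' h1 h2 => hcard.trans (hg.min T' h1 h2), ?_⟩, hx2, by omega, hdw⟩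
  obtain ⟨b, hb⟩ := hg.branch
  refine ⟨b, ?_⟩
  rw [hdw b (by rintro rfl; omega) (by rintro rfl; omega)]
  exact hb

lemma exists_branch_on_path [Fintype V] {T : SimpleGraph V} (hT : T.Connected)
    (hb : ∃ b, 3 ≤ T.degree b) {s t : V} (hs : T.degree s = 1) (ht : T.degree t = 1)
    (hst : s ≠ t) (p : T.Walk s t) (hp : p.IsPath) : ∃ b ∈ p.support, 3 ≤ T.degree b := by
  by_contra hcon
  push Not at hcon
  have hnil : ¬ p.Nil := fun h => hst h.eq
  have hclosed : ∀ a c, T.Adj a c → a ∈ p.support → c ∈ p.support := by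
    intro a c hac ha
    have hsubset : p.toSubgraph.neighborSet a ⊆ T.neighborSet a := p.toSubgraph.neighborSet_subset a
    have hle : (T.neighborSet a).ncard ≤ (p.toSubgraph.neighborSet a).ncard := by
      have hdeg : (T.neighborSet a).ncard = T.degree a := by
        rw [← card_neighborFinset_eq_degree, ← Set.ncard_coe_finset]
        simp
      rw [hdeg]
      obtain ⟨i, hi, hil⟩ := Walk.mem_support_iff_exists_getVert.1 ha
      by_cases h0 : i = 0
      · subst h0
        simp only [Walk.getVert_zero] at hi
        subst hi
        rw [hp.neighborSet_toSubgraph_startpoint hnil, Set.ncard_singleton, hs]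
      by_cases h1 : i = p.length
      · subst h1
        simp only [Walk.getVert_length] at hi
        subst hi
        rw [hp.neighborSet_toSubgraph_endpoint hnil, Set.ncard_singleton, ht]
      · have := hp.ncard_neighborSet_toSubgraph_internal_eq_two h0 (by omega)
        rw [hi] at this
        rw [this]
        have := hcon a ha
        omega
    have heq := Set.eq_of_subset_of_ncard_le hsubset hle (Set.toFinite _)
    have hc : c ∈ p.toSubgraph.neighborSet a := by rw [heq]; exact hac
    have : c ∈ p.toSubgraph.verts := p.toSubgraph.edge_vert (p.toSubgraph.symm.symm _ _ hc)
    simpa using this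
  have hall : ∀ a c (w : T.Walk a c), a ∈ p.support → c ∈ p.support := by
    intro a c w
    induction w with
    | nil => exact id
    | cons h _ ih => exact fun ha => ih (hclosed _ _ h ha)
  obtain ⟨b, hb⟩ := hb
  obtain ⟨w⟩ := hT s b
  have := hcon b (hall _ _ w p.start_mem_support)
  omega

lemma lemmaB [Fintype V] {G T : SimpleGraph V} (hg : Good G T) {s t : V}
    (hs : T.degree s = 1) (ht : T.degree t = 1) (hst : s ≠ t) : ¬ G.Adj s t := by
  intro hadj
  obtain ⟨p, hp⟩ := (hg.tree.1 s t).exists_isPath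
  obtain ⟨b, hbp, hb⟩ := exists_branch_on_path hg.tree.1 hg.branch hs ht hst p hp
  have hsb : s ≠ b := by rintro rfl; omega
  have htb : t ≠ b := by rintro rfl; omega
  obtain ⟨q, r, hqr⟩ := Walk.mem_support_iff_exists_append.1 hbp
  subst hqr
  cases r with
  | nil => exact htb rfl
  | @cons _ c _ hbc r =>
    have hnd := hp.support_nodup
    rw [Walk.support_append, Walk.support_cons, List.tail_cons, List.nodup_append'] at hnd
    obtain ⟨-, -, hdis⟩ := hnd
    have hcq : c ∉ q.support := fun h => hdis h r.start_mem_support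
    have htq : t ∉ q.support := fun h => hdis h r.end_mem_support
    have hbr : b ∉ r.support := fun h => hdis q.end_mem_support h
    have hsc : s ≠ c := fun h => hcq (h ▸ q.start_mem_support)
    have hnadj : ¬ T.Adj s t := leaf_not_adj hs q hsb htq
    have hTree : (swap T b c s t).IsTree :=
      swap_isTree hg.tree hbc hst ⟨q, hcq⟩ ⟨r.reverse, by simpa using hbr⟩
    have hle : swap T b c s t ≤ G := swap_le hg.le hadj
    have hmin := hg.min _ hle hTree
    have hsub : leafSet (swap T b c s t) ⊆ insert c (((leafSet T).erase s).erase t) := by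
      intro w hw
      rw [mem_leafSet] at hw
      by_cases hwc : w = c
      · simp [hwc]
      have hws : w ≠ s := by
        rintro rfl
        have : (swap T b c w t).neighborFinset w = insert t (T.neighborFinset w) := by
          ext a
          simp only [mem_neighborFinset, Finset.mem_insert, swap_adj]
          grind
        rw [← card_neighborFinset_eq_degree, this,
          Finset.card_insert_of_notMem (by simpa using hnadj),
          card_neighborFinset_eq_degree, hs] at hw
        omega
      have hwt : w ≠ t := by
        rintro rfl
        have : (swap T b c s w).neighborFinset w = insert s (T.neighborFinset w) := by
          ext a
          simp only [mem_neighborFinset, Finset.mem_insert, swap_adj]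
          grind
        rw [← card_neighborFinset_eq_degree, this,
          Finset.card_insert_of_notMem (by simpa using fun h => hnadj (T.symm.symm _ _ h)),
          card_neighborFinset_eq_degree, ht] at hw
        omega
      have hwb : w ≠ b := by
        rintro rfl
        have : (swap T w c s t).neighborFinset w = (T.neighborFinset w).erase c := by
          ext a
          simp only [mem_neighborFinset, Finset.mem_erase, swap_adj]
          grind
        have h2 := Finset.card_erase_add_one (s := T.neighborFinset w) (a := c) (by simpa using hbc)
        rw [← this, card_neighborFinset_eq_degree, card_neighborFinset_eq_degree] at h2
        omega
      have : (swap T b c s t).neighborFinset w = T.neighborFinset w := by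
        ext a
        simp only [mem_neighborFinset, swap_adj]
        grind
      rw [← card_neighborFinset_eq_degree, this, card_neighborFinset_eq_degree] at hw
      simp [hws, hwt, mem_leafSet, hw]
    have h1 := Finset.card_le_card hsub
    have h2 := Finset.card_insert_le c (((leafSet T).erase s).erase t)
    have h3 := Finset.card_erase_add_one (mem_leafSet.2 hs)
    have h4 := Finset.card_erase_add_one
      (show t ∈ (leafSet T).erase s from Finset.mem_erase.2 ⟨hst.symm, mem_leafSet.2 ht⟩)
    omega

lemma lemmaC [Fintype V] {G T : SimpleGraph V} (hg : Good G T) {s t x y : V}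
    (hs : T.degree s = 1) (ht : T.degree t = 1) (hst : s ≠ t)
    (hxy : T.Adj x y) (hside : Side T s x y) (hsx : s ≠ x)
    (hsy : G.Adj s y) : ¬ G.Adj t x := by
  intro h
  obtain ⟨h1, -, h3, h4⟩ := lemmaA hg hs hxy hside hsx hsy
  exact lemmaB h1 ((h4 t hst.symm h.ne).trans ht) h3 h.ne h

lemma side_of_dist {T : SimpleGraph V} (hT : T.Connected) {s x y : V}
    (h : T.dist s x < T.dist s y) : Side T s x y := by
  obtain ⟨p, hp⟩ := hT.exists_walk_length_eq_dist s x
  refine ⟨p, fun hy => ?_⟩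
  have h1 := dist_le (p.takeUntil y hy)
  have h2 := p.length_takeUntil_le_length hy
  omega

/-- Walks between two distinct neighbours of `y` in a tree go through `y`. -/
lemma mem_of_walk {T : SimpleGraph V} (hT : T.IsTree) {x y z : V} (hxy : T.Adj x y)
    (hyz : T.Adj y z) (hxz : x ≠ z) (p : T.Walk x z) : y ∈ p.support := by
  have h := (hT.existsUnique_path x z).unique (p.bypass_isPath)
    (y₂ := Walk.cons hxy (Walk.cons hyz Walk.nil)) (by
      simp [Walk.cons_isPath_iff, hxy.ne, hyz.ne, hxz])
  apply p.support_bypass_subset_support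
  rw [h]
  simp

lemma case_same [Fintype V] {G T : SimpleGraph V} (hK : K14Free G) (hg : Good G T) {s t x y : V}
    (hs : T.degree s = 1) (ht : T.degree t = 1) (hst : s ≠ t)
    (hxy : T.Adj x y) (hsS : Side T s x y) (htS : Side T t x y)
    (hsy : G.Adj s y) (hty : G.Adj t y) : False := by
  have hsx : s ≠ x := by
    rintro rfl
    obtain ⟨p, hp⟩ := htS
    exact leaf_not_adj hs p.reverse hst (by simpa using hp) hxy
  have htx : t ≠ x := by
    rintro rfl
    obtain ⟨p, hp⟩ := hsS
    exact leaf_not_adj ht p.reverse hst.symm (by simpa using hp) hxy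
  have n1 := lemmaC hg hs ht hst hxy hsS hsx hsy
  have n2 := lemmaC hg ht hs hst.symm hxy htS htx hty
  have n3 := lemmaB hg hs ht hst
  have hyd : T.degree y ≠ 1 := fun h => lemmaB hg hs h hsy.ne hsy
  obtain ⟨z, hyz, hzx⟩ : ∃ z, T.Adj y z ∧ z ≠ x := by
    by_contra hcon
    push Not at hcon
    apply hyd
    rw [← card_neighborFinset_eq_degree, Finset.card_eq_one]
    refine ⟨x, ?_⟩
    ext a
    simp only [mem_neighborFinset, Finset.mem_singleton]
    exact ⟨hcon a, fun h => h ▸ hxy.symm⟩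
  have key : ∀ u (p : T.Walk u x), y ∉ p.support → z ∉ p.support := by
    intro u p hp hz
    have h1 := mem_of_walk hg.tree hxy hyz hzx.symm (p.dropUntil z hz).reverse
    rw [Walk.support_reverse, List.mem_reverse] at h1
    exact hp (p.support_dropUntil_subset_support hz h1)
  have hside : ∀ u, Side T u x y → Side T u y z := by
    rintro u ⟨p, hp⟩
    refine ⟨p.concat hxy, ?_⟩
    have := key u p hp
    simp [Walk.support_concat, this, hyz.ne.symm]
  have n4 : ¬ G.Adj s z := fun h =>
    lemmaC hg hs ht hst hyz (hside s hsS) hsy.ne h hty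
  have n5 : ¬ G.Adj t z := fun h =>
    lemmaC hg ht hs hst.symm hyz (hside t htS) hty.ne h hsy
  have n6 : ¬ G.Adj x z := by
    intro h
    obtain ⟨h1, -, h3, h4⟩ := lemmaA hg hs hxy hsS hsx hsy
    refine lemmaC h1 h3 ((h4 t hst.symm htx).trans ht) htx.symm (x := y) (y := z) ?_ ?_ hxy.ne h hty
    · refine Or.inl ⟨hyz, fun h => hxy.ne h.1.symm, fun h => hzx h.2⟩
    · obtain ⟨p, hp⟩ := hsS
      obtain ⟨q, hq⟩ := exists_walk_swap (u := s) (v := y) p (Or.inr rfl) hp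
      have ha : (swap T x y s y).Adj s y := Or.inr ⟨hsy.ne, Or.inl ⟨rfl, rfl⟩⟩
      refine ⟨q.reverse.concat ha, ?_⟩
      have := key s p hp
      simp [Walk.support_concat, hq, this, hyz.ne.symm]
  have hsz : s ≠ z := by
    rintro rfl
    obtain ⟨p, hp⟩ := hsS
    exact key _ p hp p.start_mem_support
  have htz : t ≠ z := by
    rintro rfl
    obtain ⟨p, hp⟩ := htS
    exact key _ p hp p.start_mem_support
  exact hK ⟨y, s, t, x, z, hst, hsx, hsz, htx, htz, hzx.symm, hsy.symm, hty.symm,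
    hg.le hxy.symm, hg.le hyz, n3, n2, n4, n1, n5, n6⟩

lemma case_opp [Fintype V] {G T : SimpleGraph V} (hg : Good G T) {s t x y : V}
    (hs : T.degree s = 1) (ht : T.degree t = 1) (hst : s ≠ t)
    (hxy : T.Adj x y) (hsS : Side T s x y)
    (hsy : G.Adj s y) (htx : G.Adj t x) : False := by
  by_cases hsx : s = x
  · subst hsx
    exact lemmaB hg hs ht hst htx.symm
  · exact lemmaC hg hs ht hst hxy hsS hsx hsy htx

end Stmt13Aux

/-- If `T` is a spanning tree with minimum number of leaves of the connected
`K_{1,4}`-free graph `G` and `B(T) ≠ ∅`, then `L(T)` is pseudoindependent with respect to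
`T`: no two distinct leaves are both oblique neighbors of a common edge of `T`. -/
theorem stmt13 {V : Type*} [Fintype V] (G T : SimpleGraph V) (hG : G.Connected)
    (hK : K14Free G) (hT : T ≤ G) (hTree : T.IsTree)
    (hC1 : ∀ T' : SimpleGraph V, T' ≤ G → T'.IsTree →
      (leafSet T).card ≤ (leafSet T').card)
    (hB : (branchSet T).Nonempty) :
    ∀ s ∈ leafSet T, ∀ t ∈ leafSet T, s ≠ t →
      ¬ ∃ e ∈ T.edgeSet, IsObliqueNbr G T e s ∧ IsObliqueNbr G T e t := by
  rintro s hs t ht hst ⟨e, he, ⟨a, b, rfl, hd, hadj⟩, ⟨c, d, heq, hd', hadj'⟩⟩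
  have hg : Stmt13Aux.Good G T := ⟨hT, hTree, hC1, by
    obtain ⟨b, hb⟩ := hB
    exact ⟨b, by simpa [branchSet] using hb⟩⟩
  rw [Stmt13Aux.mem_leafSet] at hs ht
  have hab : T.Adj a b := he
  have hS := Stmt13Aux.side_of_dist hTree.1 hd
  have hS' := Stmt13Aux.side_of_dist hTree.1 hd'
  rcases Sym2.eq_iff.1 heq with ⟨rfl, rfl⟩ | ⟨rfl, rfl⟩
  · exact Stmt13Aux.case_same hK hg hs ht hst hab hS hS' hadj hadj'
  · exact Stmt13Aux.case_opp hg hs ht hst hab hS hadj hadj'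
end

section
/- Let G be a connected K_{1,4}-free finite simple graph and let T be a spanning tree of G chosen so that (C1) |L(T)| is minimum among all spanning trees of G and (C2) |V(R_Stem(T))| is maximum subject to (C1), and suppose B(T) ≠ ∅. Then for every pair of branch vertices b, r of T such that the path P_T[b,r] contains no branch vertex other than b and r, there exists an edge e of P_T[b,r] that has no oblique neighbor in the set L(T) with respect to T. -/
open SimpleGraph Finset List

open scoped Classical

variable {V : Type*}

/-- `u` and `v` are joined by a walk of `T` all of whose vertices satisfy `P`. -/
def Conn (T : SimpleGraph V) (P : V → Prop) (u v : V) : Prop :=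
  ∃ w : T.Walk u v, ∀ z ∈ w.support, P z

lemma Conn.symm {T : SimpleGraph V} {P : V → Prop} {u v : V} (h : Conn T P u v) :
    Conn T P v u := by
  obtain ⟨w, hw⟩ := h
  exact ⟨w.reverse, by simpa using hw⟩

lemma Conn.trans {T : SimpleGraph V} {P : V → Prop} {u v w : V} (h : Conn T P u v)
    (h' : Conn T P v w) : Conn T P u w := by
  obtain ⟨p, hp⟩ := h
  obtain ⟨q, hq⟩ := h'
  refine ⟨p.append q, fun z hz => ?_⟩
  rw [Walk.mem_support_append_iff] at hz
  exact hz.elim (hp z) (hq z)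

lemma Conn.mono {T : SimpleGraph V} {P P' : V → Prop} {u v : V} (h : Conn T P u v)
    (hP : ∀ z, P z → P' z) : Conn T P' u v := by
  obtain ⟨p, hp⟩ := h
  exact ⟨p, fun z hz => hP z (hp z hz)⟩

lemma Conn.refl {T : SimpleGraph V} {P : V → Prop} {u : V} (h : P u) : Conn T P u u :=
  ⟨Walk.nil, by simpa using h⟩

lemma Conn.cons {T : SimpleGraph V} {P : V → Prop} {u v w : V} (a : T.Adj u v) (hu : P u)
    (h : Conn T P v w) : Conn T P u w := by
  obtain ⟨p, hp⟩ := h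
  exact ⟨Walk.cons a p, by simpa using ⟨hu, hp⟩⟩

lemma Conn.left {T : SimpleGraph V} {P : V → Prop} {u v : V} (h : Conn T P u v) : P u := by
  obtain ⟨p, hp⟩ := h
  exact hp _ p.start_mem_support

lemma Conn.adj {T : SimpleGraph V} {P : V → Prop} {u v : V} (a : T.Adj u v) (hu : P u)
    (hv : P v) : Conn T P u v := Conn.cons a hu (Conn.refl hv)

lemma Conn.firstHit {T : SimpleGraph V} {P : V → Prop} {y r : V} (h : Conn T P y r)
    (hne : y ≠ r) : ∃ s, T.Adj s r ∧ Conn T (fun z => P z ∧ z ≠ r) y s := by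
  obtain ⟨p, hp⟩ := h
  induction p with
  | nil => exact absurd rfl hne
  | @cons u v w a q ih =>
    have hu : P u := hp u (by simp)
    by_cases hv : v = w
    · subst hv
      exact ⟨u, a, Conn.refl ⟨hu, hne⟩⟩
    · obtain ⟨s, hs, hc⟩ := ih hv (fun z hz => hp z (by simp [hz]))
      exact ⟨s, hs, Conn.cons a ⟨hu, hne⟩ hc⟩

/-- If a vertex `x ∉ Q` is joined to a vertex of `Q` avoiding `r`, and `Q` can only be entered
through `b` or `r`, then `x` is joined to `b` avoiding `Q` and `r`. -/
lemma Conn.enter {T : SimpleGraph V} {Q : V → Prop} {b r x m : V}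
    (hQ : ∀ u w, Q u → ¬ Q w → T.Adj u w → w = b ∨ w = r)
    (h : Conn T (fun z => z ≠ r) x m) (hx : ¬ Q x) (hm : Q m) :
    Conn T (fun z => z ≠ r ∧ ¬ Q z) x b := by
  obtain ⟨p, hp⟩ := h
  induction p with
  | nil => exact absurd hm hx
  | @cons u v w a q ih =>
    have hu : u ≠ r := hp u (by simp)
    by_cases hv : Q v
    · rcases hQ v u hv hx a.symm with rfl | rfl
      · exact Conn.refl ⟨hu, hx⟩
      · exact absurd rfl hu
    · exact Conn.cons a ⟨hu, hx⟩ (ih hv hm (fun z hz => hp z (by simp [hz])))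

lemma acyc {T : SimpleGraph V} (hT : T.IsTree) {c d e : V} (hd : T.Adj c d) (he : T.Adj c e)
    (hne : d ≠ e) (h : Conn T (fun z => z ≠ c) d e) : False := by
  obtain ⟨w, hw⟩ := h
  have hb := isAcyclic_iff_forall_adj_isBridge.mp hT.isAcyclic hd
  rw [isBridge_iff_forall_walk_mem_edges] at hb
  have := hb (Walk.cons he w.reverse)
  simp only [Walk.edges_cons, Walk.edges_reverse, List.mem_cons, List.mem_reverse] at this
  rcases this with h | h
  · simp at h
    grind
  · exact hw _ (Walk.fst_mem_support_of_mem_edges _ h) rfl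

lemma conn_of_dist {T : SimpleGraph V} (hT : T.Connected) {x a b : V}
    (h : T.dist x a < T.dist x b) : Conn T (fun z => z ≠ b) x a := by
  obtain ⟨p, hp⟩ := hT.exists_walk_length_eq_dist x a
  refine ⟨p, ?_⟩
  rintro z hz rfl
  have h1 := p.length_takeUntil_le_length hz
  have h2 := dist_le (p.takeUntil z hz)
  omega

/-- The graph obtained from `T` by deleting the edges in `R` and adding those in `A`. -/
def exch (T : SimpleGraph V) (R A : Finset (Sym2 V)) : SimpleGraph V :=
  T.deleteEdges (R : Set (Sym2 V)) ⊔ fromEdgeSet (A : Set (Sym2 V))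

lemma exch_adj {T : SimpleGraph V} {R A : Finset (Sym2 V)} {u v : V} :
    (exch T R A).Adj u v ↔ (T.Adj u v ∧ s(u, v) ∉ R) ∨ (s(u, v) ∈ A ∧ u ≠ v) := by
  simp [exch]

lemma Conn.reach {T : SimpleGraph V} {R A : Finset (Sym2 V)} {P : V → Prop} {u v : V}
    (h : Conn T P u v) (hR : ∀ a b, P a → P b → s(a, b) ∉ R) : (exch T R A).Reachable u v := by
  obtain ⟨p, hp⟩ := h
  induction p with
  | nil => exact Reachable.refl _
  | @cons u v w a q ih =>
    have h1 : (exch T R A).Adj u v :=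
      exch_adj.mpr (Or.inl ⟨a, hR _ _ (hp u (by simp)) (hp v (by simp))⟩)
    exact h1.reachable.trans (ih (fun z hz => hp z (by simp [hz])))

lemma exch_isTree [Fintype V] {T : SimpleGraph V} (hT : T.IsTree) {R A : Finset (Sym2 V)}
    (hR : ∀ e ∈ R, e ∈ T.edgeSet) (hc : A.card ≤ R.card)
    (hreach : ∀ u v, s(u, v) ∈ R → (exch T R A).Reachable u v) : (exch T R A).IsTree := by
  have hcon : (exch T R A).Connected := by
    have := hT.connected.nonempty
    refine ⟨fun u v => ?_⟩
    obtain ⟨w⟩ := hT.connected u v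
    induction w with
    | nil => exact Reachable.refl _
    | @cons u v w a q ih =>
      refine Reachable.trans ?_ ih
      by_cases h : s(u, v) ∈ R
      · exact hreach _ _ h
      · exact (exch_adj.mpr (Or.inl ⟨a, h⟩) : (exch T R A).Adj u v).reachable
  rw [isTree_iff_connected_and_card]
  refine ⟨hcon, le_antisymm ?_ hcon.card_vert_le_card_edgeSet_add_one⟩
  have h1 := (isTree_iff_connected_and_card.mp hT).2
  have h2 : (exch T R A).edgeFinset ⊆ (T.edgeFinset \ R) ∪ A := by
    intro e
    induction e with | h a b =>
    simp only [mem_edgeFinset, mem_edgeSet, exch_adj, Finset.mem_union, Finset.mem_sdiff]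
    tauto
  have h3 := (Finset.card_le_card h2).trans (Finset.card_union_le _ _)
  have h4 : R ⊆ T.edgeFinset := fun e he => by simpa using hR e he
  have h5 := Finset.card_sdiff_add_card_eq_card h4
  rw [Nat.card_eq_fintype_card, ← edgeFinset_card] at h1 ⊢
  omega

lemma exch_le {G T : SimpleGraph V} (hT : T ≤ G) {R A : Finset (Sym2 V)}
    (hA : ∀ e ∈ A, e ∈ G.edgeSet) : exch T R A ≤ G := by
  intro u v h
  rcases exch_adj.mp h with h | h
  · exact hT h.1
  · exact hA _ h.1

/-- `v` has at least two neighbours. -/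
def Two (T : SimpleGraph V) (v : V) : Prop := ∃ a b, a ≠ b ∧ T.Adj v a ∧ T.Adj v b

lemma Two.ne_one [Fintype V] {T : SimpleGraph V} {v : V} (h : Two T v) : T.degree v ≠ 1 := by
  obtain ⟨a, b, hab, ha, hb⟩ := h
  intro h
  rw [degree_eq_one_iff_existsUnique_adj] at h
  exact hab (h.unique ha hb)

lemma two_of [Fintype V] {T : SimpleGraph V} {v : V} (h : 2 ≤ T.degree v) (w : V) :
    ∃ a, T.Adj v a ∧ a ≠ w := by
  have : 1 < (T.neighborFinset v).card := by rw [card_neighborFinset_eq_degree]; omega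
  obtain ⟨a, ha, hne⟩ := Finset.exists_mem_ne this w
  exact ⟨a, by simpa using ha, hne⟩

lemma two_of' [Fintype V] {T : SimpleGraph V} {v : V} (h : 2 ≤ T.degree v) :
    ∃ a b, T.Adj v a ∧ T.Adj v b ∧ a ≠ b := by
  obtain ⟨a, ha, -⟩ := two_of h v
  obtain ⟨b, hb, hne⟩ := two_of h a
  exact ⟨a, b, ha, hb, hne.symm⟩

lemma three_of [Fintype V] {T : SimpleGraph V} {v : V} (h : 3 ≤ T.degree v) (w w' : V) :
    ∃ a, T.Adj v a ∧ a ≠ w ∧ a ≠ w' := by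
  have h1 : 3 ≤ (T.neighborFinset v).card := by rw [card_neighborFinset_eq_degree]; omega
  have h2 : ((T.neighborFinset v \ {w, w'}) : Finset V).Nonempty := by
    rw [← Finset.card_pos]
    have := Finset.le_card_sdiff ({w, w'} : Finset V) (T.neighborFinset v)
    have := Finset.card_le_two (a := w) (b := w')
    omega
  obtain ⟨a, ha⟩ := h2
  simp at ha
  exact ⟨a, ha.1, by tauto, by tauto⟩

lemma three_of' [Fintype V] {T : SimpleGraph V} {v : V} (h : 3 ≤ T.degree v) (w : V) :
    ∃ a b, T.Adj v a ∧ T.Adj v b ∧ a ≠ b ∧ a ≠ w ∧ b ≠ w := by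
  obtain ⟨a, ha, haw, -⟩ := three_of h w w
  obtain ⟨b, hb, h1, h2⟩ := three_of h w a
  exact ⟨a, b, ha, hb, h2.symm, haw, h1⟩

lemma leaf_nbr [Fintype V] {T : SimpleGraph V} {x : V} (h : T.degree x = 1) :
    ∃ n, T.Adj x n ∧ ∀ z, T.Adj x z → z = n := by
  rw [degree_eq_one_iff_existsUnique_adj] at h
  exact h

/-- A walk leaving a leaf `x` starts with its unique neighbour. -/
lemma Conn.leaf {T : SimpleGraph V} {P : V → Prop} {x n c : V} (hn : ∀ z, T.Adj x z → z = n)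
    (h : Conn T P x c) (hne : x ≠ c) : Conn T (fun z => P z ∧ z ≠ x) n c := by
  obtain ⟨s, hs, hc⟩ := h.symm.firstHit hne.symm
  rw [← hn s hs.symm]
  exact hc.symm

lemma drop_contra [Fintype V] {G T : SimpleGraph V} (hT : T ≤ G) (hTree : T.IsTree)
    (hC1 : ∀ T' : SimpleGraph V, T' ≤ G → T'.IsTree → (leafSet T).card ≤ (leafSet T').card)
    {R A : Finset (Sym2 V)}
    (hR : ∀ e ∈ R, e ∈ T.edgeSet) (hA : ∀ e ∈ A, e ∈ G.edgeSet) (hc : A.card ≤ R.card)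
    (hreach : ∀ u v, s(u, v) ∈ R → (exch T R A).Reachable u v)
    {x : V} (hx : T.degree x = 1) (hx' : Two (exch T R A) x)
    (hv : ∀ v, v ≠ x → 2 ≤ T.degree v → Two (exch T R A) v)
    (hpos : ∀ v, 0 < T.degree v) : False := by
  have h1 := hC1 _ (exch_le hT hA) (exch_isTree hTree hR hc hreach)
  have h2 : leafSet (exch T R A) ⊆ (leafSet T).erase x := by
    intro v
    simp only [leafSet, Finset.mem_filter, Finset.mem_univ, true_and, Finset.mem_erase]
    intro h
    have hvx : v ≠ x := by rintro rfl; exact hx'.ne_one h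
    refine ⟨hvx, ?_⟩
    by_contra h3
    have := hpos v
    exact (hv v hvx (by omega)).ne_one h
  have h3 := Finset.card_le_card h2
  have h4 : x ∈ leafSet T := by simp [leafSet, hx]
  have := Finset.card_erase_lt_of_mem h4
  omega

/-- The basic single exchange. -/
lemma single [Fintype V] {G T : SimpleGraph V} (hT : T ≤ G) (hTree : T.IsTree)
    (hC1 : ∀ T' : SimpleGraph V, T' ≤ G → T'.IsTree → (leafSet T).card ≤ (leafSet T').card)
    (hpos : ∀ v, 0 < T.degree v)
    {x c d : V} (hx : T.degree x = 1) (hcd : T.Adj c d) (hc : 3 ≤ T.degree c)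
    (hxd : G.Adj x d) (hconn : Conn T (fun z => z ≠ d) x c) : False := by
  obtain ⟨n, hn, hnu⟩ := leaf_nbr hx
  have hxc : x ≠ c := by rintro rfl; omega
  have hnd : n ≠ d := (hconn.leaf hnu hxc).left.1
  have hxd' : x ≠ d := hxd.ne
  have hcd' := hcd.ne
  refine drop_contra hT hTree hC1 (R := {s(c, d)}) (A := {s(x, d)}) ?_ ?_ ?_ ?_ hx ?_ ?_ hpos
  · simpa using hcd
  · simpa using hxd
  · simp
  · have key : (exch T {s(c, d)} {s(x, d)}).Reachable c d := by
      refine Reachable.trans (hconn.symm.reach ?_) (Adj.reachable (exch_adj.mpr (Or.inr ?_)))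
      · intro a b ha hb
        simp; grind
      · simp [hxd']
    intro u v huv
    simp at huv
    rcases huv with ⟨rfl, rfl⟩ | ⟨rfl, rfl⟩
    · exact key
    · exact key.symm
  · refine ⟨n, d, hnd, exch_adj.mpr (Or.inl ⟨hn, ?_⟩), exch_adj.mpr (Or.inr ?_)⟩
    · simp; grind
    · simp [hxd']
  · intro v hvx hv
    by_cases h1 : v = c
    · subst h1
      obtain ⟨a, b, ha, hb, hab, had, hbd⟩ := three_of' hc d
      refine ⟨a, b, hab, exch_adj.mpr (Or.inl ⟨ha, ?_⟩), exch_adj.mpr (Or.inl ⟨hb, ?_⟩)⟩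
      · simp; grind
      · simp; grind
    by_cases h2 : v = d
    · subst h2
      obtain ⟨a, ha, hne⟩ := two_of hv c
      refine ⟨a, x, ?_, exch_adj.mpr (Or.inl ⟨ha, ?_⟩), exch_adj.mpr (Or.inr ?_)⟩
      · rintro rfl
        exact hnd (hnu _ ha.symm).symm
      · simp; grind
      · simp [hxd'.symm]
    obtain ⟨a, b, ha, hb, hab⟩ := two_of' hv
    refine ⟨a, b, hab, exch_adj.mpr (Or.inl ⟨ha, ?_⟩), exch_adj.mpr (Or.inl ⟨hb, ?_⟩)⟩
    · simp; grind
    · simp; grind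

/-- The interior vertices of a path. -/
def SegInt {T : SimpleGraph V} {b r : V} (p : T.Walk b r) (v : V) : Prop :=
  v ∈ p.support ∧ v ≠ b ∧ v ≠ r

lemma inter_deg [Fintype V] {T : SimpleGraph V} {b r : V} (p : T.Walk b r) (hp : p.IsPath)
    (hint : ∀ v ∈ p.support, 3 ≤ T.degree v → v = b ∨ v = r) {u : V} (hu : SegInt p u) :
    T.degree u = 2 ∧ ∀ w, T.Adj u w → w ∈ p.support := by
  obtain ⟨hus, hub, hur⟩ := hu
  obtain ⟨i, hi, hil⟩ := Walk.mem_support_iff_exists_getVert.mp hus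
  have hi0 : i ≠ 0 := by rintro rfl; simp at hi; exact hub hi.symm
  have hil' : i ≠ p.length := by rintro rfl; simp at hi; exact hur hi.symm
  obtain ⟨j, rfl⟩ : ∃ j, i = j + 1 := ⟨i - 1, by omega⟩
  have h1 : T.Adj (p.getVert j) (p.getVert (j + 1)) := p.adj_getVert_succ (by omega)
  have h2 : T.Adj (p.getVert (j + 1)) (p.getVert (j + 1 + 1)) := p.adj_getVert_succ (by omega)
  rw [hi] at h1 h2
  have hne : p.getVert j ≠ p.getVert (j + 1 + 1) := by
    intro h
    have := hp.getVert_injOn (by simp; omega) (by simp; omega) h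
    omega
  have hsub : ({p.getVert j, p.getVert (j + 1 + 1)} : Finset V) ⊆ T.neighborFinset u := by
    intro z hz
    simp at hz ⊢
    rcases hz with rfl | rfl
    · exact h1.symm
    · exact h2
  have hc : T.degree u ≤ 2 := by
    by_contra h
    rcases hint u hus (by omega) with h | h
    · exact hub h
    · exact hur h
  have hc2 := Finset.card_pair hne
  have heq := Finset.eq_of_subset_of_card_le hsub (by
    rw [card_neighborFinset_eq_degree, hc2]; exact hc)
  constructor
  · rw [← card_neighborFinset_eq_degree, ← heq, hc2]
  · intro w hw
    have : w ∈ T.neighborFinset u := by simpa using hw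
    rw [← heq] at this
    simp at this
    rcases this with rfl | rfl <;> exact Walk.getVert_mem_support _ _

lemma dropLast_conn {T : SimpleGraph V} {b r : V} (p : T.Walk b r) (hp : p.IsPath)
    (hbr : b ≠ r) {d : V} (hd : d ∈ p.support) (hdr : d ≠ r) :
    Conn T (fun z => SegInt p z ∨ z = b) b d := by
  refine ⟨p.takeUntil d hd, fun z hz => ?_⟩
  by_cases hzb : z = b
  · exact Or.inr hzb
  · refine Or.inl ⟨Walk.support_takeUntil_subset_support _ _ hz, hzb, ?_⟩
    rintro rfl
    exact Walk.endpoint_notMem_support_takeUntil hp hd hdr.symm hz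

lemma ext_leaf [Fintype V] {G T : SimpleGraph V} (hT : T ≤ G) (hTree : T.IsTree)
    (hC1 : ∀ T' : SimpleGraph V, T' ≤ G → T'.IsTree → (leafSet T).card ≤ (leafSet T').card)
    (hpos : ∀ v, 0 < T.degree v)
    {b r : V} (p : T.Walk b r) (hp : p.IsPath) (hbr : b ≠ r) (hb : 3 ≤ T.degree b)
    (hr : 3 ≤ T.degree r)
    (hint : ∀ v ∈ p.support, 3 ≤ T.degree v → v = b ∨ v = r)
    (hcov : ∀ e ∈ p.edges, ∃ s ∈ leafSet T, IsObliqueNbr G T e s) :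
    SegInt p p.penultimate ∧ T.Adj p.penultimate r ∧ ∃ x, T.degree x = 1 ∧ G.Adj x r ∧
      Conn T (fun z => z ≠ r ∧ ¬ SegInt p z) x b := by
  have hn : ¬ p.Nil := Walk.not_nil_of_ne hbr
  have hmr : T.Adj p.penultimate r := Walk.adj_penultimate hn
  obtain ⟨x, hx, a, c, he, hd, hadj⟩ := hcov _ (Walk.mk_penultimate_end_mem_edges hn)
  have hx1 : T.degree x = 1 := by simpa [leafSet] using hx
  have hcn := conn_of_dist hTree.connected hd
  rw [Sym2.eq_iff] at he
  rcases he with ⟨rfl, rfl⟩ | ⟨rfl, rfl⟩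
  · by_cases hm : p.penultimate = b
    · rw [hm] at hcn hmr
      exact (single hT hTree hC1 hpos hx1 hmr hb hadj hcn).elim
    · have hmi : SegInt p p.penultimate := ⟨Walk.getVert_mem_support _ _, hm, hmr.ne⟩
      refine ⟨hmi, hmr, x, hx1, hadj, Conn.enter ?_ hcn ?_ hmi⟩
      · intro u w hu hw huw
        have := (inter_deg p hp hint hu).2 w huw
        by_contra hh
        push Not at hh
        exact hw ⟨this, hh⟩
      · intro hxi
        have := (inter_deg p hp hint hxi).1
        omega
  · exact (single hT hTree hC1 hpos hx1 hmr.symm hr hadj hcn).elim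

/-- The data extracted from the path joining the two branch vertices. -/
structure Seg [Fintype V] (G T : SimpleGraph V) (Q : V → Prop) (b r m v x y : V) : Prop where
  hb : 3 ≤ T.degree b
  hr : 3 ≤ T.degree r
  hbr : b ≠ r
  hQb : ¬ Q b
  hQr : ¬ Q r
  hQ : ∀ u w, Q u → ¬ Q w → T.Adj u w → w = b ∨ w = r
  hdeg : ∀ u, Q u → T.degree u = 2
  hm : Q m
  hmr : T.Adj m r
  bQ : ∀ d, Q d → Conn T (fun z => Q z ∨ z = b) b d
  hv : Q v
  hvb : T.Adj v b
  vr : Conn T (fun z => Q z ∨ z = r) r v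
  hx : T.degree x = 1
  hxr : G.Adj x r
  xb : Conn T (fun z => z ≠ r ∧ ¬ Q z) x b
  hy : T.degree y = 1
  hyb : G.Adj y b
  yr : Conn T (fun z => z ≠ b ∧ ¬ Q z) y r

lemma seg_of [Fintype V] {G T : SimpleGraph V} (hT : T ≤ G) (hTree : T.IsTree)
    (hC1 : ∀ T' : SimpleGraph V, T' ≤ G → T'.IsTree → (leafSet T).card ≤ (leafSet T').card)
    (hpos : ∀ v, 0 < T.degree v)
    {b r : V} (p : T.Walk b r) (hp : p.IsPath) (hbr : b ≠ r) (hb : 3 ≤ T.degree b)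
    (hr : 3 ≤ T.degree r)
    (hint : ∀ v ∈ p.support, 3 ≤ T.degree v → v = b ∨ v = r)
    (hcov : ∀ e ∈ p.edges, ∃ s ∈ leafSet T, IsObliqueNbr G T e s) :
    ∃ m v x y, Seg G T (SegInt p) b r m v x y := by
  obtain ⟨h1, h2, x, hx, hxr, hxb⟩ := ext_leaf hT hTree hC1 hpos p hp hbr hb hr hint hcov
  obtain ⟨k1, k2, y, hy, hyb, hyr⟩ := ext_leaf hT hTree hC1 hpos p.reverse hp.reverse hbr.symm
    hr hb (by simpa [or_comm] using hint) (by simpa using hcov)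
  have hI : SegInt p.reverse = SegInt p := by
    ext z; simp [SegInt, and_comm]
  rw [hI] at k1 hyr
  refine ⟨p.penultimate, p.reverse.penultimate, x, y, ?_⟩
  refine ⟨hb, hr, hbr, fun h => h.2.1 rfl, fun h => h.2.2 rfl, ?_,
    fun u hu => (inter_deg p hp hint hu).1, h1, h2, fun d hd => dropLast_conn p hp hbr hd.1 hd.2.2, k1, k2, ?_,
    hx, hxr, hxb, hy, hyb, hyr⟩
  · intro u w hu hw huw
    have := (inter_deg p hp hint hu).2 w huw
    by_contra hh
    push Not at hh
    exact hw ⟨this, hh⟩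
  · have := dropLast_conn p.reverse hp.reverse hbr.symm (d := p.reverse.penultimate)
      (Walk.getVert_mem_support _ _) k2.ne
    rwa [hI] at this

section
variable [Fintype V] {G T : SimpleGraph V} {Q : V → Prop} {b r m v x y : V}

lemma Seg.bd (S : Seg G T Q b r m v x y) {d : V} (hd : Q d) : Conn T (fun z => z ≠ r) b d := by
  have h1 := S.hQr
  have h2 := S.hbr
  refine (S.bQ d hd).mono (fun z hz => ?_)
  rcases hz with hz | rfl
  · rintro rfl; exact h1 hz
  · exact h2

/-- `x` and `m` are joined avoiding `r`. -/
lemma Seg.xm (S : Seg G T Q b r m v x y) : Conn T (fun z => z ≠ r) x m :=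
  (S.xb.mono (fun z hz => hz.1)).trans (S.bd S.hm)

lemma Seg.xnb (S : Seg G T Q b r m v x y) : x ≠ b := by
  have := S.hx; have := S.hb; rintro rfl; omega

lemma Seg.xnr (S : Seg G T Q b r m v x y) : x ≠ r := S.hxr.ne

lemma Seg.ynr (S : Seg G T Q b r m v x y) : y ≠ r := by
  have := S.hy; have := S.hr; rintro rfl; omega

lemma Seg.ynb (S : Seg G T Q b r m v x y) : y ≠ b := S.hyb.ne

lemma Seg.xQ (S : Seg G T Q b r m v x y) : ¬ Q x := S.xb.left.2

lemma Seg.yQ (S : Seg G T Q b r m v x y) : ¬ Q y := S.yr.left.2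

/-- The leaf `x` is not adjacent to `r` in `T`. -/
lemma Seg.xr_not (S : Seg G T Q b r m v x y) : ¬ T.Adj x r := by
  intro h
  obtain ⟨n, hn, hnu⟩ := leaf_nbr S.hx
  have := (S.xb.leaf hnu S.xnb).left.1.1
  exact this (hnu _ h).symm

lemma Seg.yb_not (S : Seg G T Q b r m v x y) : ¬ T.Adj y b := by
  intro h
  obtain ⟨n, hn, hnu⟩ := leaf_nbr S.hy
  have := (S.yr.leaf hnu S.ynr).left.1.1
  exact this (hnu _ h).symm

/-- A neighbour of `r` other than `m` is not on the path. -/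
lemma Seg.nbr (S : Seg G T Q b r m v x y) (hTree : T.IsTree) {d : V} (hd : T.Adj r d)
    (hdm : d ≠ m) : ¬ Conn T (fun z => z ≠ r) d m :=
  fun h => acyc hTree hd S.hmr.symm hdm h

lemma Seg.nbrQ (S : Seg G T Q b r m v x y) (hTree : T.IsTree) {d : V} (hd : T.Adj r d)
    (hdm : d ≠ m) : ¬ Q d :=
  fun h => S.nbr hTree hd hdm ((S.bd h).symm.trans (S.bd S.hm))

lemma Seg.nbrb (S : Seg G T Q b r m v x y) (hTree : T.IsTree) {d : V} (hd : T.Adj r d)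
    (hdm : d ≠ m) : d ≠ b := by
  rintro rfl
  exact S.nbr hTree hd hdm (S.bd S.hm)

/-- `x` is not adjacent in `G` to a neighbour of `r` other than `m`. -/
lemma Seg.xd (S : Seg G T Q b r m v x y) (hT : T ≤ G) (hTree : T.IsTree)
    (hC1 : ∀ T' : SimpleGraph V, T' ≤ G → T'.IsTree → (leafSet T).card ≤ (leafSet T').card)
    (hpos : ∀ v, 0 < T.degree v) {d : V} (hd : T.Adj r d) (hdm : d ≠ m) : ¬ G.Adj x d := by
  intro h
  refine single hT hTree hC1 hpos S.hx hd S.hr h ?_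
  obtain ⟨w, hw⟩ := S.xm
  have hdw : d ∉ w.support := by
    intro hdw
    refine S.nbr hTree hd hdm ⟨w.dropUntil d hdw, fun z hz => hw z ?_⟩
    exact Walk.support_dropUntil_subset_support _ _ hz
  refine Conn.trans (v := m) ⟨w, ?_⟩ (Conn.adj S.hmr hdm.symm hd.ne)
  rintro z hz rfl
  exact hdw hz

/-- `m` is not adjacent in `G` to another neighbour of `r`. -/
lemma Seg.md (S : Seg G T Q b r m v x y) (hT : T ≤ G) (hTree : T.IsTree)
    (hC1 : ∀ T' : SimpleGraph V, T' ≤ G → T'.IsTree → (leafSet T).card ≤ (leafSet T').card)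
    (hpos : ∀ v, 0 < T.degree v) {d : V} (hd : T.Adj r d) (hdm : d ≠ m) : ¬ G.Adj m d := by
  intro h
  obtain ⟨n, hn, hnu⟩ := leaf_nbr S.hx
  have hxr := S.xnr
  have hmr := S.hmr.ne
  have hdr := hd.ne
  have hxrn := S.xr_not
  have hxm : x ≠ m := by rintro rfl; exact S.xQ S.hm
  have hnr : n ≠ r := by rintro rfl; exact hxrn hn
  have hxd : x ≠ d := by rintro rfl; exact hxrn hd.symm
  have hdmT : ¬ T.Adj d m := fun h' => S.nbr hTree hd hdm (Conn.adj h' hdr.symm hmr)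
  refine drop_contra hT hTree hC1 (R := {s(r, d), s(m, r)}) (A := {s(m, d), s(x, r)})
    ?_ ?_ ?_ ?_ S.hx ?_ ?_ hpos
  · simpa using ⟨hd, S.hmr⟩
  · simpa using ⟨h, S.hxr⟩
  · have hc : ({s(r, d), s(m, r)} : Finset (Sym2 V)).card = 2 :=
      Finset.card_pair (by simp; grind)
    rw [hc]
    exact Finset.card_le_two
  · have k1 : (exch T {s(r, d), s(m, r)} {s(m, d), s(x, r)}).Reachable x m := by
      refine S.xm.reach ?_
      intro a b ha hb
      simp; grind
    have k2 : (exch T {s(r, d), s(m, r)} {s(m, d), s(x, r)}).Reachable x r :=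
      Adj.reachable (exch_adj.mpr (Or.inr (by simp [hxr])))
    have k3 : (exch T {s(r, d), s(m, r)} {s(m, d), s(x, r)}).Reachable m d :=
      Adj.reachable (exch_adj.mpr (Or.inr (by simp [hdm.symm])))
    have k4 := k2.symm.trans (k1.trans k3)
    have k5 := k1.symm.trans k2
    intro u w huw
    simp at huw
    rcases huw with (⟨rfl, rfl⟩ | ⟨rfl, rfl⟩) | ⟨rfl, rfl⟩ | ⟨rfl, rfl⟩
    · exact k4
    · exact k4.symm
    · exact k5
    · exact k5.symm
  · refine ⟨n, r, hnr, exch_adj.mpr (Or.inl ⟨hn, ?_⟩), exch_adj.mpr (Or.inr ?_)⟩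
    · simp; grind
    · simp [hxr]
  · intro u hux hu
    by_cases h1 : u = r
    · subst h1
      obtain ⟨a, ha, had, ham⟩ := three_of S.hr d m
      refine ⟨a, x, ?_, exch_adj.mpr (Or.inl ⟨ha, ?_⟩), exch_adj.mpr (Or.inr ?_)⟩
      · rintro rfl; exact hxrn ha.symm
      · simp; grind
      · simp [hxr.symm]
    by_cases h2 : u = m
    · subst h2
      obtain ⟨a, ha, har⟩ := two_of hu r
      refine ⟨a, d, ?_, exch_adj.mpr (Or.inl ⟨ha, ?_⟩), exch_adj.mpr (Or.inr ?_)⟩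
      · rintro rfl; exact hdmT ha.symm
      · simp; grind
      · simp [hdm.symm]
    by_cases h3 : u = d
    · subst h3
      obtain ⟨a, ha, har⟩ := two_of hu r
      refine ⟨a, m, ?_, exch_adj.mpr (Or.inl ⟨ha, ?_⟩), exch_adj.mpr (Or.inr ?_)⟩
      · rintro rfl; exact hdmT ha
      · simp; grind
      · simp [hdm]
    obtain ⟨a, c, ha, hc, hac⟩ := two_of' hu
    refine ⟨a, c, hac, exch_adj.mpr (Or.inl ⟨ha, ?_⟩), exch_adj.mpr (Or.inl ⟨hc, ?_⟩)⟩
    · simp; grind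
    · simp; grind

/-- The triple exchange. -/
lemma Seg.dd (S : Seg G T Q b r m v x y) (hT : T ≤ G) (hTree : T.IsTree)
    (hC1 : ∀ T' : SimpleGraph V, T' ≤ G → T'.IsTree → (leafSet T).card ≤ (leafSet T').card)
    (hpos : ∀ v, 0 < T.degree v) {d e : V} (hd : T.Adj r d) (hdm : d ≠ m)
    (he : T.Adj r e) (hem : e ≠ m) (hde : d ≠ e)
    (hyd : Conn T (fun z => (z ≠ b ∧ ¬ Q z) ∧ z ≠ r) y d) : ¬ G.Adj d e := by
  intro h
  obtain ⟨n, hn, hnu⟩ := leaf_nbr S.hx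
  obtain ⟨k, hk, hku⟩ := leaf_nbr S.hy
  have hxr := S.xnr
  have hxb := S.xnb
  have hyr := S.ynr
  have hyb := S.ynb
  have hmr := S.hmr.ne
  have hdr := hd.ne
  have her := he.ne
  have hbr := S.hbr
  have hQm := S.hm
  have hQv := S.hv
  have hQb := S.hQb
  have hQr := S.hQr
  have hQx := S.xQ
  have hQy := S.yQ
  have hQd := S.nbrQ hTree hd hdm
  have hQe := S.nbrQ hTree he hem
  have hdb := S.nbrb hTree hd hdm
  have heb := S.nbrb hTree he hem
  have hmb : m ≠ b := by rintro rfl; exact hQb hQm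
  have hvr : v ≠ r := by rintro rfl; exact hQr hQv
  have hvb : v ≠ b := by rintro rfl; exact hQb hQv
  have hvd : v ≠ d := by rintro rfl; exact hQd hQv
  have hve : v ≠ e := by rintro rfl; exact hQe hQv
  have hxrn := S.xr_not
  have hybn := S.yb_not
  have hxm : x ≠ m := by rintro rfl; exact hQx hQm
  have hxv : x ≠ v := by rintro rfl; exact hQx hQv
  have hyv : y ≠ v := by rintro rfl; exact hQy hQv
  have hnr : n ≠ r := by rintro rfl; exact hxrn hn
  have hkb : k ≠ b := by rintro rfl; exact hybn hk
  have hxd : x ≠ d := by rintro rfl; exact hxrn hd.symm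
  have hxe : x ≠ e := by rintro rfl; exact hxrn he.symm
  have hdeT : ¬ T.Adj d e := fun h' => acyc hTree hd he hde (Conn.adj h' hdr.symm her.symm)
  have hxy : x ≠ y := by
    rintro rfl
    exact S.nbr hTree hd hdm ((hyd.mono (fun z hz => hz.2)).symm.trans S.xm)
  have hkr : y ≠ d → k ≠ r := fun hyd' => (hyd.leaf hku hyd').left.1.2
  set R : Finset (Sym2 V) := {s(r, d), s(r, e), s(b, v)} with hRdef
  set A : Finset (Sym2 V) := {s(y, b), s(d, e), s(x, r)} with hAdef
  have hRc : R.card = 3 := Finset.card_eq_three.mpr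
    ⟨_, _, _, by simp; grind, by simp; grind, by simp; grind, hRdef⟩
  have hAc : A.card ≤ R.card := by rw [hRc]; exact Finset.card_le_three
  have hR : ∀ e ∈ R, e ∈ T.edgeSet := by simpa [hRdef] using ⟨hd, he, S.hvb.symm⟩
  have hA : ∀ e ∈ A, e ∈ G.edgeSet := by simpa [hAdef] using ⟨S.hyb, h, S.hxr⟩
  have hreach : ∀ u v, s(u, v) ∈ R → (exch T R A).Reachable u v := by
    have k1 : (exch T R A).Reachable x b := S.xb.reach (by
      intro a c ha hc; simp [hRdef]; grind)
    have k2 : (exch T R A).Reachable y d := hyd.reach (by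
      intro a c ha hc; simp [hRdef]; grind)
    have k3 : (exch T R A).Reachable r v := S.vr.reach (by
      intro a c ha hc; simp [hRdef]; grind)
    have k4 : (exch T R A).Reachable y b :=
      Adj.reachable (exch_adj.mpr (Or.inr (by simp [hAdef, hyb])))
    have k5 : (exch T R A).Reachable d e :=
      Adj.reachable (exch_adj.mpr (Or.inr (by simp [hAdef, hde])))
    have k6 : (exch T R A).Reachable x r :=
      Adj.reachable (exch_adj.mpr (Or.inr (by simp [hAdef, hxr])))
    have l1 : (exch T R A).Reachable r d := k6.symm.trans (k1.trans (k4.symm.trans k2))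
    have l2 : (exch T R A).Reachable r e := l1.trans k5
    have l3 : (exch T R A).Reachable b v := k1.symm.trans (k6.trans k3)
    intro u w huw
    simp [hRdef] at huw
    rcases huw with (⟨rfl, rfl⟩ | ⟨rfl, rfl⟩) | (⟨rfl, rfl⟩ | ⟨rfl, rfl⟩) | ⟨rfl, rfl⟩ | ⟨rfl, rfl⟩
    · exact l1
    · exact l1.symm
    · exact l2
    · exact l2.symm
    · exact l3
    · exact l3.symm
  have hx' : Two (exch T R A) x := by
    refine ⟨n, r, hnr, exch_adj.mpr (Or.inl ⟨hn, ?_⟩), exch_adj.mpr (Or.inr ?_)⟩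
    · simp [hRdef]; grind
    · simp [hAdef, hxr]
  have hy' : Two (exch T R A) y := by
    by_cases hyd' : y = d
    · subst hyd'
      refine ⟨b, e, heb.symm, exch_adj.mpr (Or.inr ?_), exch_adj.mpr (Or.inr ?_)⟩
      · simp [hAdef, hyb]
      · simp [hAdef, hde]
    · have := hkr hyd'
      refine ⟨k, b, hkb, exch_adj.mpr (Or.inl ⟨hk, ?_⟩), exch_adj.mpr (Or.inr ?_)⟩
      · simp [hRdef]; grind
      · simp [hAdef, hyb]
  have hall : ∀ u, u ≠ v → 2 ≤ T.degree u → Two (exch T R A) u := by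
    intro u huv hu
    by_cases h1 : u = r
    · subst h1
      refine ⟨m, x, hxm.symm, exch_adj.mpr (Or.inl ⟨S.hmr.symm, ?_⟩), exch_adj.mpr (Or.inr ?_)⟩
      · simp [hRdef]; grind
      · simp [hAdef, hxr.symm]
    by_cases h2 : u = b
    · subst h2
      obtain ⟨a, ha, hav⟩ := two_of hu v
      refine ⟨a, y, ?_, exch_adj.mpr (Or.inl ⟨ha, ?_⟩), exch_adj.mpr (Or.inr ?_)⟩
      · rintro rfl; exact hybn ha.symm
      · simp [hRdef]; grind
      · simp [hAdef, hyb.symm]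
    by_cases h3 : u = d
    · subst h3
      obtain ⟨a, ha, har⟩ := two_of hu r
      refine ⟨a, e, ?_, exch_adj.mpr (Or.inl ⟨ha, ?_⟩), exch_adj.mpr (Or.inr ?_)⟩
      · rintro rfl; exact hdeT ha
      · simp [hRdef]; grind
      · simp [hAdef, hde]
    by_cases h4 : u = e
    · subst h4
      obtain ⟨a, ha, har⟩ := two_of hu r
      refine ⟨a, d, ?_, exch_adj.mpr (Or.inl ⟨ha, ?_⟩), exch_adj.mpr (Or.inr ?_)⟩
      · rintro rfl; exact hdeT ha.symm
      · simp [hRdef]; grind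
      · simp [hAdef, hde.symm]
    obtain ⟨a, c, ha, hc, hac⟩ := two_of' hu
    refine ⟨a, c, hac, exch_adj.mpr (Or.inl ⟨ha, ?_⟩), exch_adj.mpr (Or.inl ⟨hc, ?_⟩)⟩
    · simp [hRdef]; grind
    · simp [hRdef]; grind
  have h1 := hC1 _ (exch_le hT hA) (exch_isTree hTree hR hAc hreach)
  have h2 : leafSet (exch T R A) ⊆ insert v (((leafSet T).erase x).erase y) := by
    intro u
    simp only [leafSet, Finset.mem_filter, Finset.mem_univ, true_and, Finset.mem_erase,
      Finset.mem_insert]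
    intro h
    by_cases huv : u = v
    · exact Or.inl huv
    refine Or.inr ⟨?_, ?_, ?_⟩
    · rintro rfl; exact hy'.ne_one h
    · rintro rfl; exact hx'.ne_one h
    · by_contra h3
      have := hpos u
      exact (hall u huv (by omega)).ne_one h
  have h3 := (Finset.card_le_card h2).trans (Finset.card_insert_le _ _)
  have h4 : x ∈ leafSet T := by simp [leafSet, S.hx]
  have h5 : y ∈ (leafSet T).erase x := by simp [leafSet, S.hy, hxy.symm]
  have := Finset.card_erase_lt_of_mem h4
  have := Finset.card_erase_lt_of_mem h5
  omega

/-- Vertices reachable from a leaf without meeting a branch vertex. -/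
def Pend (T : SimpleGraph V) (u : V) : Prop :=
  ∃ z, T.degree z = 1 ∧ Conn T (fun w => ¬ 3 ≤ T.degree w) z u

lemma not_rstem_iff {T : SimpleGraph V} {u : V} :
    u ∉ {v : V | ∀ x : V, T.degree x = 1 → ∀ p : T.Walk x v, p.IsPath →
      ∃ w ∈ p.support, 3 ≤ T.degree w} ↔ Pend T u := by
  constructor
  · intro h
    simp only [Set.mem_setOf_eq] at h
    push Not at h
    obtain ⟨z, hz, p, -, hw⟩ := h
    exact ⟨z, hz, p, fun w hw' => by have := hw w hw'; omega⟩
  · rintro ⟨z, hz, p, hp⟩ h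
    obtain ⟨w, hw, hbr⟩ := h z hz p.bypass p.bypass_isPath
    exact hp w (p.support_bypass_subset_support hw) hbr

/-- Induction principle for `Pend`. -/
lemma Pend.ind {T : SimpleGraph V} {J : V → Prop} (h0 : ∀ z, T.degree z = 1 → J z)
    (h1 : ∀ u w, J u → T.Adj u w → ¬ 3 ≤ T.degree w → J w) {u : V} (h : Pend T u) : J u := by
  obtain ⟨z, hz, p, hp⟩ := h
  have hJ := h0 z hz
  clear hz
  induction p with
  | nil => exact hJ
  | @cons a c d hac q ih =>
    exact ih (fun w hw => hp w (by simp [hw])) (h1 _ _ hJ hac (hp c (by simp)))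

lemma Pend.step {T : SimpleGraph V} {u w : V} (h : Pend T u) (ha : T.Adj u w)
    (hw : ¬ 3 ≤ T.degree w) : Pend T w := by
  obtain ⟨z, hz, hc⟩ := h
  exact ⟨z, hz, hc.trans (Conn.adj ha hc.symm.left hw)⟩

lemma Pend.leaf {T : SimpleGraph V} {u : V} (h : T.degree u = 1) : Pend T u :=
  ⟨u, h, Conn.refl (by omega)⟩

/-- A pendant vertex lies in a branch-free set left by at most one edge. -/
lemma Pend.closed {T : SimpleGraph V} {u : V} (h : Pend T u) :
    ∃ (X : V → Prop) (a w : V), X u ∧ (∀ z, X z → ¬ 3 ≤ T.degree z) ∧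
      ∀ a' c, X a' → ¬ X c → T.Adj a' c → a' = a ∧ c = w := by
  refine Pend.ind (J := fun u => ∃ (X : V → Prop) (a w : V), X u ∧
      (∀ z, X z → ¬ 3 ≤ T.degree z) ∧
      ∀ a' c, X a' → ¬ X c → T.Adj a' c → a' = a ∧ c = w) ?_ ?_ h
  · intro z hz
    obtain ⟨n, hn, hnu⟩ := leaf_nbr hz
    refine ⟨fun t => t = z, z, n, rfl, ?_, ?_⟩
    · rintro t rfl; omega
    · rintro t c rfl - htc
      exact ⟨rfl, hnu _ htc⟩
  · rintro u w ⟨X, a, c, hX, hd, hex⟩ huw hw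
    by_cases hXw : X w
    · exact ⟨X, a, c, hXw, hd, hex⟩
    -- the other neighbour of `w`
    have hex2 : ∃ t, ∀ t', T.Adj w t' → t' ≠ u → t' = t := by
      by_contra hcon
      push Not at hcon
      obtain ⟨t1, h1, h1u, -⟩ := hcon u
      obtain ⟨t2, h2, h2u, h21⟩ := hcon t1
      have hsub : ({u, t1, t2} : Finset V) ⊆ T.neighborFinset w := by
        intro q hq
        simp at hq ⊢
        rcases hq with rfl | rfl | rfl
        · exact huw.symm
        · exact h1
        · exact h2
      have hc3 : ({u, t1, t2} : Finset V).card = 3 :=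
        Finset.card_eq_three.mpr ⟨u, t1, t2, h1u.symm, h2u.symm, h21.symm, rfl⟩
      have := Finset.card_le_card hsub
      rw [card_neighborFinset_eq_degree, hc3] at this
      exact hw this
    obtain ⟨t, ht⟩ := hex2
    refine ⟨fun z => X z ∨ z = w, w, t, Or.inr rfl, ?_, ?_⟩
    · rintro z (hz | rfl)
      · exact hd z hz
      · exact hw
    · rintro a' c' (ha' | rfl) hc' hac
      · push Not at hc'
        have e1 := hex _ _ ha' hc'.1 hac
        have e2 := hex _ _ hX hXw huw
        exact absurd (e1.2.trans e2.2.symm) hc'.2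
      · push Not at hc'
        refine ⟨rfl, ht _ hac ?_⟩
        rintro rfl
        exact hc'.1 hX

lemma Conn.leaves {T : SimpleGraph V} {P X : V → Prop} {u w : V} (h : Conn T P u w) (hu : X u)
    (hw : ¬ X w) : ∃ a c, X a ∧ ¬ X c ∧ T.Adj a c ∧ P c := by
  obtain ⟨p, hp⟩ := h
  induction p with
  | nil => exact absurd hu hw
  | @cons a c d hac q ih =>
    by_cases hc : X c
    · exact ih hc hw (fun z hz => hp z (by simp [hz]))
    · exact ⟨a, c, hu, hc, hac, hp c (by simp)⟩

lemma Seg.m_not_pend (S : Seg G T Q b r m v x y) : ¬ Pend T m := by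
  intro h
  obtain ⟨X, a, w, hX, hd, hex⟩ := h.closed
  have h1 := hex m r hX (fun h => hd r h S.hr) S.hmr
  obtain ⟨a', c, ha', hc, hac, hcr⟩ := (S.bd S.hm).symm.leaves hX (fun h => hd b h S.hb)
  have h2 := hex _ _ ha' hc hac
  exact hcr (h2.2.trans h1.2.symm)

/-- `x` is not adjacent in `G` to `m`. -/
lemma Seg.xm_not (S : Seg G T Q b r m v x y) (hT : T ≤ G) (hTree : T.IsTree)
    (hC1 : ∀ T' : SimpleGraph V, T' ≤ G → T'.IsTree → (leafSet T).card ≤ (leafSet T').card)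
    (hC2 : ∀ T' : SimpleGraph V, T' ≤ G → T'.IsTree →
      (leafSet T').card = (leafSet T).card → rstemCard T' ≤ rstemCard T)
    (hpos : ∀ v, 0 < T.degree v) : ¬ G.Adj x m := by
  intro h
  obtain ⟨n, hn, hnu⟩ := leaf_nbr S.hx
  have hxr := S.xnr
  have hxb := S.xnb
  have hmr := S.hmr.ne
  have hQm := S.hm
  have hxrn := S.xr_not
  have hxn := hn.ne
  have hxm : x ≠ m := by rintro rfl; exact S.xQ hQm
  have hnr : n ≠ r := by rintro rfl; exact hxrn hn
  have hnm : n ≠ m := by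
    rintro rfl
    rcases S.hQ _ _ hQm S.xQ hn.symm with h | h
    · exact hxb h
    · exact hxr h
  set R : Finset (Sym2 V) := {s(m, r), s(x, n)} with hRdef
  set A : Finset (Sym2 V) := {s(x, m), s(x, r)} with hAdef
  have hRc : R.card = 2 := Finset.card_pair (by simp; grind)
  have hAc : A.card ≤ R.card := by rw [hRc]; exact Finset.card_le_two
  have hR : ∀ e ∈ R, e ∈ T.edgeSet := by simpa [hRdef] using ⟨S.hmr, hn⟩
  have hA : ∀ e ∈ A, e ∈ G.edgeSet := by simpa [hAdef] using ⟨h, S.hxr⟩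
  have axm : (exch T R A).Adj x m := exch_adj.mpr (Or.inr (by simp [hAdef, hxm]))
  have axr : (exch T R A).Adj x r := exch_adj.mpr (Or.inr (by simp [hAdef, hxr]))
  have hreach : ∀ u v, s(u, v) ∈ R → (exch T R A).Reachable u v := by
    have k1 : (exch T R A).Reachable n m := (S.xm.leaf hnu hxm).reach (by
      intro a c ha hc; simp [hRdef]; grind)
    have l1 : (exch T R A).Reachable m r := axm.reachable.symm.trans axr.reachable
    have l2 : (exch T R A).Reachable x n := axm.reachable.trans k1.symm
    intro u w huw
    simp [hRdef] at huw
    rcases huw with (⟨rfl, rfl⟩ | ⟨rfl, rfl⟩) | ⟨rfl, rfl⟩ | ⟨rfl, rfl⟩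
    · exact l1
    · exact l1.symm
    · exact l2
    · exact l2.symm
  have hx' : Two (exch T R A) x := ⟨m, r, hmr, axm, axr⟩
  have hall : ∀ u, u ≠ x → u ≠ n → 2 ≤ T.degree u → Two (exch T R A) u := by
    intro u hux hun hu
    by_cases h1 : u = r
    · subst h1
      obtain ⟨a, ha, ham⟩ := two_of hu m
      refine ⟨a, x, ?_, exch_adj.mpr (Or.inl ⟨ha, ?_⟩), axr.symm⟩
      · rintro rfl; exact hxrn ha.symm
      · simp [hRdef]; grind
    by_cases h2 : u = m
    · subst h2
      obtain ⟨a, ha, har⟩ := two_of hu r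
      refine ⟨a, x, ?_, exch_adj.mpr (Or.inl ⟨ha, ?_⟩), axm.symm⟩
      · rintro rfl; exact hnm (hnu _ ha.symm).symm
      · simp [hRdef]; grind
    obtain ⟨a, c, ha, hc, hac⟩ := two_of' hu
    refine ⟨a, c, hac, exch_adj.mpr (Or.inl ⟨ha, ?_⟩), exch_adj.mpr (Or.inl ⟨hc, ?_⟩)⟩
    · simp [hRdef]; grind
    · simp [hRdef]; grind
  by_cases hn3 : 3 ≤ T.degree n
  · refine drop_contra hT hTree hC1 hR hA hAc hreach S.hx hx' ?_ hpos
    intro u hux hu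
    by_cases hun : u = n
    · subst hun
      obtain ⟨a, c, ha, hc, hac, hax, hcx⟩ := three_of' hn3 x
      refine ⟨a, c, hac, exch_adj.mpr (Or.inl ⟨ha, ?_⟩), exch_adj.mpr (Or.inl ⟨hc, ?_⟩)⟩
      · simp [hRdef]; grind
      · simp [hRdef]; grind
    · exact hall u hux hun hu
  -- the leaf number is unchanged
  have hle := exch_le hT hA (R := R)
  have htr := exch_isTree hTree hR hAc hreach
  have h1 := hC1 _ hle htr
  have h2 : leafSet (exch T R A) ⊆ insert n ((leafSet T).erase x) := by
    intro u
    simp only [leafSet, Finset.mem_filter, Finset.mem_univ, true_and, Finset.mem_erase,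
      Finset.mem_insert]
    intro h
    by_cases hun : u = n
    · exact Or.inl hun
    have hux : u ≠ x := by rintro rfl; exact hx'.ne_one h
    refine Or.inr ⟨hux, ?_⟩
    by_contra h3
    have := hpos u
    exact (hall u hux hun (by omega)).ne_one h
  have h3 := (Finset.card_le_card h2).trans (Finset.card_insert_le _ _)
  have h4 : x ∈ leafSet T := by simp [leafSet, S.hx]
  have h5 := Finset.card_erase_lt_of_mem h4
  have hst := hC2 _ hle htr (by omega)
  -- branch vertices survive
  have hbranch : ∀ u, 3 ≤ T.degree u → 3 ≤ (exch T R A).degree u := by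
    intro u hu
    have hux : u ≠ x := by rintro rfl; have := S.hx; omega
    have hun : u ≠ n := by rintro rfl; exact hn3 hu
    have hum : u ≠ m := by rintro rfl; have := S.hdeg _ hQm; omega
    by_cases hur : u = r
    · subst hur
      have hsub : insert x ((T.neighborFinset u).erase m) ⊆ (exch T R A).neighborFinset u := by
        intro z hz
        simp only [Finset.mem_insert, Finset.mem_erase, mem_neighborFinset] at hz ⊢
        rcases hz with rfl | ⟨hzm, hz⟩
        · exact axr.symm
        · refine exch_adj.mpr (Or.inl ⟨hz, ?_⟩)
          simp [hRdef]; grind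
      have hc := Finset.card_le_card hsub
      have hm' : m ∈ T.neighborFinset u := by simpa using S.hmr.symm
      have hx'' : x ∉ (T.neighborFinset u).erase m := by
        simp only [Finset.mem_erase, mem_neighborFinset]
        exact fun hh => hxrn hh.2.symm
      rw [Finset.card_insert_of_notMem hx'', Finset.card_erase_add_one hm',
        card_neighborFinset_eq_degree, card_neighborFinset_eq_degree] at hc
      omega
    · have hsub : T.neighborFinset u ⊆ (exch T R A).neighborFinset u := by
        intro z hz
        simp only [mem_neighborFinset] at hz ⊢
        refine exch_adj.mpr (Or.inl ⟨hz, ?_⟩)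
        simp [hRdef]; grind
      have hc := Finset.card_le_card hsub
      rw [card_neighborFinset_eq_degree, card_neighborFinset_eq_degree] at hc
      omega
  have hrp : ¬ Pend T r := by
    rintro ⟨z, -, hz⟩
    exact hz.symm.left S.hr
  have hpend : ∀ u, Pend (exch T R A) u → Pend T u ∧ u ≠ x := by
    intro u hu
    refine hu.ind (J := fun u => Pend T u ∧ u ≠ x) ?_ ?_
    · intro z hz
      have hz' : z ∈ leafSet (exch T R A) := by simp [leafSet, hz]
      have := h2 hz'
      simp only [leafSet, Finset.mem_filter, Finset.mem_univ, true_and, Finset.mem_erase,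
        Finset.mem_insert] at this
      rcases this with rfl | ⟨hzx, hz1⟩
      · exact ⟨(Pend.leaf S.hx).step hn hn3, hxn.symm⟩
      · exact ⟨Pend.leaf hz1, hzx⟩
    · rintro u w ⟨hpu, hux⟩ huw hw
      have hwx : w ≠ x := by
        rintro rfl
        rcases exch_adj.mp huw with ⟨h1, h2⟩ | ⟨h1, -⟩
        · have : u = n := hnu _ h1.symm
          subst this
          exact h2 (by simp [hRdef, Sym2.eq_swap])
        · simp [hAdef] at h1
          have : u = m ∨ u = r := by grind
          rcases this with rfl | rfl
          · exact S.m_not_pend hpu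
          · exact hrp hpu
      refine ⟨hpu.step ?_ (fun h => hw (hbranch w h)), hwx⟩
      rcases exch_adj.mp huw with ⟨h1, -⟩ | ⟨h1, -⟩
      · exact h1
      · simp [hAdef] at h1
        grind
  refine absurd hst (not_le.mpr ?_)
  unfold rstemCard
  refine Set.ncard_lt_ncard ?_ (Set.toFinite _)
  rw [Set.ssubset_iff_exists]
  refine ⟨?_, x, ?_, ?_⟩
  · intro u hu
    by_contra hcon
    exact not_rstem_iff.mpr (hpend u (not_rstem_iff.mp hcon)).1 hu
  · by_contra hcon
    exact (hpend x (not_rstem_iff.mp hcon)).2 rfl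
  · exact not_rstem_iff.mpr (Pend.leaf S.hx)

lemma Seg.contra (S : Seg G T Q b r m v x y) (hK : K14Free G) (hT : T ≤ G) (hTree : T.IsTree)
    (hC1 : ∀ T' : SimpleGraph V, T' ≤ G → T'.IsTree → (leafSet T).card ≤ (leafSet T').card)
    (hC2 : ∀ T' : SimpleGraph V, T' ≤ G → T'.IsTree →
      (leafSet T').card = (leafSet T).card → rstemCard T' ≤ rstemCard T)
    (hpos : ∀ v, 0 < T.degree v) : False := by
  obtain ⟨d, hdr, hyd⟩ := S.yr.firstHit S.ynr
  have hd := hdr.symm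
  have hdm : d ≠ m := by rintro rfl; exact hyd.symm.left.1.2 S.hm
  obtain ⟨e, he, hem, hed⟩ := three_of S.hr m d
  have hxrn := S.xr_not
  refine hK ⟨r, x, m, d, e, ?_, ?_, ?_, hdm.symm, hem.symm, hed.symm, S.hxr.symm,
    hT S.hmr.symm, hT hd, hT he, S.xm_not hT hTree hC1 hC2 hpos,
    S.xd hT hTree hC1 hpos hd hdm, S.xd hT hTree hC1 hpos he hem,
    S.md hT hTree hC1 hpos hd hdm, S.md hT hTree hC1 hpos he hem,
    S.dd hT hTree hC1 hpos hd hdm he hem hed.symm hyd⟩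
  · rintro rfl; exact S.xQ S.hm
  · rintro rfl; exact hxrn hdr
  · rintro rfl; exact hxrn he.symm

end

/-- Let `T` be a spanning tree of the connected `K_{1,4}`-free graph `G`
chosen so that (C1) `|L(T)|` is minimum and (C2) `|V(R_Stem(T))|` is maximum subject to
(C1), with `B(T) ≠ ∅`. Then for every pair of branch vertices `b, r` such that `P_T[b,r]`
contains no branch vertex other than `b` and `r`, some edge of `P_T[b,r]` has no oblique
neighbor in `L(T)` with respect to `T`. -/
theorem stmt14 {V : Type*} [Fintype V] (G T : SimpleGraph V) (hG : G.Connected)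
    (hK : K14Free G) (hT : T ≤ G) (hTree : T.IsTree)
    (hC1 : ∀ T' : SimpleGraph V, T' ≤ G → T'.IsTree →
      (leafSet T).card ≤ (leafSet T').card)
    (hC2 : ∀ T' : SimpleGraph V, T' ≤ G → T'.IsTree →
      (leafSet T').card = (leafSet T).card → rstemCard T' ≤ rstemCard T)
    (hB : (branchSet T).Nonempty) :
    ∀ b r : V, b ∈ branchSet T → r ∈ branchSet T → b ≠ r →
      ∀ p : T.Walk b r, p.IsPath →
        (∀ v ∈ p.support, 3 ≤ T.degree v → v = b ∨ v = r) →
        ∃ e ∈ p.edges, ∀ s ∈ leafSet T, ¬ IsObliqueNbr G T e s := by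
  intro b r hb hr hbr p hp hint
  by_contra hcon
  push Not at hcon
  have hb3 : 3 ≤ T.degree b := by simpa [branchSet] using hb
  have hr3 : 3 ≤ T.degree r := by simpa [branchSet] using hr
  have : Nontrivial V := ⟨b, r, hbr⟩
  have hpos : ∀ v, 0 < T.degree v :=
    fun v => hTree.connected.preconnected.degree_pos_of_nontrivial v
  obtain ⟨m, v, x, y, S⟩ := seg_of hT hTree hC1 hpos p hp hbr hb3 hr3 hint hcon
  exact S.contra hK hT hTree hC1 hC2 hpos
end

section
/- Let k and m be non-negative integers with m ≤ k+1, let G be a connected K_{1,4}-free finite simple graph having no spanning tree T' with |L(T')| + |B(T')| ≤ m+k+2, and let T be a spanning tree of G chosen so that (C1) |L(T)| is minimum among all spanning trees of G and (C2) |V(R_Stem(T))| is maximum subject to (C1). Then there exists an independent set S of G with |S| = m+2 such that at least k distinct edges of T each have no oblique neighbor in S with respect to T. -/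
open SimpleGraph Finset List

open scoped Classical

variable {V : Type*}

set_option linter.all false
set_option linter.unusedSimpArgs false
set_option linter.unusedSectionVars false

namespace Stmt15

section dist
variable {T : SimpleGraph V}

lemma dstep (hT : T.IsTree) (x : V) {a b : V} (h : T.Adj a b) :
    T.dist x a = T.dist x b + 1 ∨ T.dist x b = T.dist x a + 1 :=
  hT.dist_eq_dist_add_one_of_adj x h

lemma dtri (hT : T.IsTree) (x y z : V) : T.dist x z ≤ T.dist x y + T.dist y z :=
  hT.connected.dist_triangle

lemma dpos (hT : T.IsTree) {x y : V} (h : x ≠ y) : 0 < T.dist x y :=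
  hT.connected.pos_dist_of_ne h

/-- there is a neighbour of `b` one step closer to `x`. -/
lemma ex_toward (hT : T.IsTree) {x b : V} (h : x ≠ b) :
    ∃ c, T.Adj b c ∧ T.dist x b = T.dist x c + 1 := by
  obtain ⟨p, hp⟩ := hT.connected.exists_walk_length_eq_dist b x
  cases p with
  | nil => exact absurd rfl h
  | @cons _ c _ hadj q =>
    refine ⟨c, hadj, ?_⟩
    have h1 := T.dist_le q
    simp only [Walk.length_cons] at hp
    have h2 := dstep hT x hadj
    rw [T.dist_comm (u := b)] at hp
    rw [T.dist_comm (u := c)] at h1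
    omega

/-- uniqueness of the neighbour of `b` closer to `x`. -/
lemma toward_unique (hT : T.IsTree) {x b c p : V} (hc : T.Adj b c) (hp : T.Adj b p)
    (h1 : T.dist x c < T.dist x b) (h2 : T.dist x p < T.dist x b) : c = p := by
  obtain ⟨w1, hw1⟩ := hT.connected.exists_walk_length_eq_dist c x
  obtain ⟨w2, hw2⟩ := hT.connected.exists_walk_length_eq_dist p x
  have e1 := dstep hT x hc
  have e2 := dstep hT x hp
  have p1 : (Walk.cons hc w1).IsPath := by
    apply Walk.isPath_of_length_eq_dist
    rw [Walk.length_cons, hw1, T.dist_comm (u := c), T.dist_comm (u := b)]; omega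
  have p2 : (Walk.cons hp w2).IsPath := by
    apply Walk.isPath_of_length_eq_dist
    rw [Walk.length_cons, hw2, T.dist_comm (u := p), T.dist_comm (u := b)]; omega
  have := (hT.existsUnique_path b x).unique p1 p2
  simp only [Walk.cons.injEq] at this
  exact this.1

/-- no triangles. -/
lemma no_tri (hT : T.IsTree) {a b c : V} (h1 : T.Adj a b) (h2 : T.Adj a c) : ¬ T.Adj b c := by
  intro h3
  have := dstep hT a h3
  rw [dist_eq_one_iff_adj.mpr h1, dist_eq_one_iff_adj.mpr h2] at this
  omega

/-- an edge crossing the cut of the edge `a b` is `a b`. -/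
lemma crossing (hT : T.IsTree) {a b y z : V} (hab : T.Adj a b) (hyz : T.Adj y z)
    (h1 : T.dist y a < T.dist y b) (h2 : T.dist z b < T.dist z a) : y = a ∧ z = b := by
  have e1 := dstep hT a hyz
  have e2 := dstep hT b hyz
  rw [T.dist_comm (u := a), T.dist_comm (u := a)] at e1
  rw [T.dist_comm (u := b), T.dist_comm (u := b)] at e2
  have e3 := dstep hT y hab
  have e4 := dstep hT z hab
  by_cases hz : z = b
  · subst hz
    simp only [dist_self] at *
    have : T.dist y a = 0 := by omega
    exact ⟨hT.connected.dist_eq_zero_iff.mp this, trivial⟩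
  · exfalso
    obtain ⟨w, hw, hd⟩ := ex_toward hT (x := b) (b := z) (Ne.symm hz)
    have e5 := dstep hT w hab
    have e6 := dstep hT a hw
    rw [T.dist_comm (u := b), T.dist_comm (u := b)] at hd
    have : w = y := by
      apply toward_unique hT (x := a) hw hyz.symm
      · rw [T.dist_comm (u := a), T.dist_comm (u := a)] at *; omega
      · rw [T.dist_comm (u := a), T.dist_comm (u := a)] at *; omega
    subst this
    omega

end dist

section swap
variable {T : SimpleGraph V}

/-- exchange of edges -/
def swp (T : SimpleGraph V) (R A : Finset (Sym2 V)) : SimpleGraph V :=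
  T.deleteEdges (R : Set (Sym2 V)) ⊔ fromEdgeSet (A : Set (Sym2 V))

lemma swp_adj {R A : Finset (Sym2 V)} {x y : V} :
    (swp T R A).Adj x y ↔ (T.Adj x y ∧ s(x, y) ∉ R) ∨ (s(x, y) ∈ A ∧ x ≠ y) := by
  simp [swp]

lemma swp_reach (hT : T.IsTree) {R A : Finset (Sym2 V)} : ∀ (n : ℕ) (x c : V), T.dist x c = n →
    (∀ e ∈ R, ∃ y ∈ e, T.dist x y + T.dist y c ≠ T.dist x c) →
    (swp T R A).Reachable x c := by
  intro n
  induction n with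
  | zero =>
    intro x c h _
    rw [hT.connected.dist_eq_zero_iff.mp h]
  | succ n ih =>
    intro x c h hR
    have hne : c ≠ x := by rintro rfl; simp at h
    obtain ⟨x', hx', hd⟩ := ex_toward hT hne
    have hd' : T.dist x c = T.dist x' c + 1 := by
      rw [T.dist_comm (u := x), T.dist_comm (u := x')]; exact hd
    have hxx : T.dist x x' = 1 := dist_eq_one_iff_adj.mpr hx'
    have hadj : (swp T R A).Adj x x' := by
      rw [swp_adj]; left
      refine ⟨hx', fun hmem => ?_⟩
      obtain ⟨y, hy, hb⟩ := hR _ hmem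
      rw [Sym2.mem_iff] at hy
      rcases hy with rfl | rfl
      · simp at hb
      · omega
    refine hadj.reachable.trans (ih x' c (by omega) ?_)
    intro e he
    obtain ⟨y, hy, hb⟩ := hR e he
    refine ⟨y, hy, fun hc => hb ?_⟩
    have h1 := dtri hT x x' y
    have h2 := dtri hT x y c
    omega

lemma swp_geo (hT : T.IsTree) {R A : Finset (Sym2 V)} (x c : V)
    (h : ∀ e ∈ R, ∃ y ∈ e, T.dist x y + T.dist y c ≠ T.dist x c) :
    (swp T R A).Reachable x c := swp_reach hT _ x c rfl h

lemma swp_le {G : SimpleGraph V} (hTG : T ≤ G) {R A : Finset (Sym2 V)}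
    (hA : ∀ e ∈ A, e ∈ G.edgeSet) : swp T R A ≤ G := by
  intro x y h
  rw [swp_adj] at h
  rcases h with h | h
  · exact hTG h.1
  · exact hA _ h.1

lemma swp_tree [Fintype V] (hT : T.IsTree) {R A : Finset (Sym2 V)}
    (hR : ∀ e ∈ R, e ∈ T.edgeSet) (hc : A.card ≤ R.card)
    (hreach : ∀ x y, s(x, y) ∈ R → (swp T R A).Reachable x y) : (swp T R A).IsTree := by
  have hconn : (swp T R A).Connected := by
    have := hT.connected.nonempty
    refine Connected.mk ?_
    intro x y
    obtain ⟨w⟩ := hT.connected x y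
    induction w with
    | nil => exact Reachable.refl _
    | @cons a b c hab q ih =>
      refine Reachable.trans ?_ ih
      by_cases h : s(a, b) ∈ R
      · exact hreach _ _ h
      · exact Adj.reachable (swp_adj.mpr (Or.inl ⟨hab, h⟩))
  rw [isTree_iff_connected_and_card]
  refine ⟨hconn, le_antisymm ?_ hconn.card_vert_le_card_edgeSet_add_one⟩
  have h1 := (isTree_iff_connected_and_card.mp hT).2
  rw [← h1]
  have hsub : (swp T R A).edgeSet ⊆ ((T.edgeFinset \ R ∪ A : Finset (Sym2 V)) : Set (Sym2 V)) := by
    intro e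
    induction e with
    | _ x y =>
      intro h
      rw [mem_edgeSet, swp_adj] at h
      simp only [Finset.coe_union, Finset.coe_sdiff, Set.mem_union, Set.mem_sdiff,
        Finset.mem_coe, mem_edgeFinset, mem_edgeSet]
      tauto
  have h2 := Set.ncard_le_ncard hsub (Finset.finite_toSet _)
  rw [Set.ncard_coe_finset] at h2
  have h3 := Finset.card_union_le (T.edgeFinset \ R) A
  have hR' : R ⊆ T.edgeFinset := fun e he => mem_edgeFinset.mpr (hR e he)
  have h4 := Finset.card_sdiff_add_card_eq_card hR'
  have h5 : T.edgeFinset.card = Nat.card T.edgeSet := by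
    rw [Nat.card_eq_fintype_card, edgeFinset_card]
  rw [← Nat.card_coe_set_eq] at h2
  omega

end swap

section deg
variable [Fintype V] {T : SimpleGraph V}

/-- at least two neighbours -/
def Two (H : SimpleGraph V) (x : V) : Prop := ∃ y z, y ≠ z ∧ H.Adj x y ∧ H.Adj x z

lemma two_iff {H : SimpleGraph V} {x : V} : Two H x ↔ 2 ≤ H.degree x := by
  rw [← card_neighborFinset_eq_degree, ← Nat.lt_iff_add_one_le, Finset.one_lt_card]
  simp only [mem_neighborFinset, Two]
  constructor
  · rintro ⟨y, z, h, h1, h2⟩; exact ⟨y, h1, z, h2, h⟩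
  · rintro ⟨y, h1, z, h2, h⟩; exact ⟨y, z, h, h1, h2⟩

lemma three_ex {H : SimpleGraph V} {x : V} (h : 3 ≤ H.degree x) :
    ∃ a b c, a ≠ b ∧ a ≠ c ∧ b ≠ c ∧ H.Adj x a ∧ H.Adj x b ∧ H.Adj x c := by
  rw [← card_neighborFinset_eq_degree] at h
  obtain ⟨a, b, c, ha, hb, hc, h1, h2, h3⟩ := Finset.two_lt_card_iff.mp (show 2 < _ from h)
  simp only [mem_neighborFinset] at ha hb hc
  exact ⟨a, b, c, h1, h2, h3, ha, hb, hc⟩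

lemma three_of {H : SimpleGraph V} {x a b c : V} (h1 : a ≠ b) (h2 : a ≠ c) (h3 : b ≠ c)
    (ha : H.Adj x a) (hb : H.Adj x b) (hc : H.Adj x c) : 3 ≤ H.degree x := by
  rw [← card_neighborFinset_eq_degree]
  exact Finset.two_lt_card_iff.mpr ⟨a, b, c, by simpa, by simpa, by simpa, h1, h2, h3⟩

lemma three_two {H : SimpleGraph V} {x : V} (h : 3 ≤ H.degree x) (z : V) :
    ∃ a b, a ≠ b ∧ a ≠ z ∧ b ≠ z ∧ H.Adj x a ∧ H.Adj x b := by
  obtain ⟨a, b, c, h1, h2, h3, ha, hb, hc⟩ := three_ex h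
  by_cases e1 : a = z
  · subst e1; exact ⟨b, c, h3, h1.symm, h2.symm, hb, hc⟩
  by_cases e2 : b = z
  · subst e2; exact ⟨a, c, h2, h1, h3.symm, ha, hc⟩
  exact ⟨a, b, h1, e1, e2, ha, hb⟩

lemma three_one {H : SimpleGraph V} {x : V} (h : 3 ≤ H.degree x) (y z : V) :
    ∃ a, a ≠ y ∧ a ≠ z ∧ H.Adj x a := by
  obtain ⟨a, b, h1, h2, h3, ha, hb⟩ := three_two h z
  by_cases e : a = y
  · subst e; exact ⟨b, h1.symm, h3, hb⟩
  · exact ⟨a, e, h2, ha⟩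

lemma two_one {H : SimpleGraph V} {x : V} (h : Two H x) (z : V) : ∃ a, a ≠ z ∧ H.Adj x a := by
  obtain ⟨a, b, h1, ha, hb⟩ := h
  by_cases e : a = z
  · subst e; exact ⟨b, h1.symm, hb⟩
  · exact ⟨a, e, ha⟩

lemma leaf_iff [Nontrivial V] {H : SimpleGraph V} (hH : H.IsTree) {x : V} :
    x ∈ leafSet H ↔ ¬ Two H x := by
  have := hH.connected.preconnected.degree_pos_of_nontrivial x
  rw [two_iff, leafSet, Finset.mem_filter]
  simp only [Finset.mem_univ, true_and]
  constructor <;> intro h <;> omega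

lemma leaf_nbr [Nontrivial V] {H : SimpleGraph V} (hH : H.IsTree) (x : V) : ∃ q, H.Adj x q := by
  have := hH.connected.preconnected.degree_pos_of_nontrivial x
  exact (H.degree_pos_iff_exists_adj x).mp this

lemma leaf_drop [Nontrivial V] {T T' : SimpleGraph V} (hT : T.IsTree) (hT' : T'.IsTree) {v : V}
    (hv : ¬ Two T v) (hv' : Two T' v) (h : ∀ x, Two T x → Two T' x) :
    (leafSet T').card < (leafSet T).card := by
  apply Finset.card_lt_card
  rw [Finset.ssubset_iff_of_subset]
  · exact ⟨v, (leaf_iff hT).mpr hv, fun h' => (leaf_iff hT').mp h' hv'⟩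
  · intro x hx
    rw [leaf_iff hT] 
    rw [leaf_iff hT'] at hx
    exact fun h' => hx (h x h')

lemma leaf_sub [Nontrivial V] {T T' : SimpleGraph V} (hT : T.IsTree) (hT' : T'.IsTree) {v z : V}
    (hv' : Two T' v) (h : ∀ x, x ≠ z → Two T x → Two T' x) :
    leafSet T' ⊆ insert z ((leafSet T).erase v) := by
  intro x hx
  rw [leaf_iff hT'] at hx
  rw [Finset.mem_insert, Finset.mem_erase, leaf_iff hT]
  by_cases e : x = z
  · exact Or.inl e
  · refine Or.inr ⟨?_, fun h' => hx (h x e h')⟩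
    rintro rfl; exact hx hv'

lemma leaf_drop2 [Nontrivial V] {T T' : SimpleGraph V} (hT : T.IsTree) (hT' : T'.IsTree)
    {u v z : V} (huv : u ≠ v) (hu : ¬ Two T u) (hv : ¬ Two T v) (hu' : Two T' u) (hv' : Two T' v)
    (h : ∀ x, x ≠ z → Two T x → Two T' x) :
    (leafSet T').card < (leafSet T).card := by
  have hsub : leafSet T' ⊆ insert z (((leafSet T).erase u).erase v) := by
    intro x hx
    have h1 := leaf_sub hT hT' hv' h hx
    rw [leaf_iff hT'] at hx
    simp only [Finset.mem_insert, Finset.mem_erase] at h1 ⊢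
    rcases h1 with h1 | ⟨h1, h2⟩
    · exact Or.inl h1
    · refine Or.inr ⟨h1, ?_, h2⟩
      rintro rfl; exact hx hu'
  have h1 := Finset.card_le_card hsub
  have h2 := Finset.card_insert_le z (((leafSet T).erase u).erase v)
  have h3 : v ∈ (leafSet T).erase u :=
    Finset.mem_erase.mpr ⟨huv.symm, (leaf_iff hT).mpr hv⟩
  have h4 := Finset.card_erase_add_one h3
  have h5 := Finset.card_erase_add_one ((leaf_iff hT).mpr hu)
  omega

end deg

section lemmas
variable [Fintype V] {G T : SimpleGraph V}

/-- `T` is a spanning tree with the minimum number of leaves. -/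
structure Ctx (G T : SimpleGraph V) : Prop where
  le : T ≤ G
  tree : T.IsTree
  c1 : ∀ T' : SimpleGraph V, T' ≤ G → T'.IsTree → (leafSet T).card ≤ (leafSet T').card

lemma two_keep {R A : Finset (Sym2 V)} {x : V} (h : Two T x) (hR : ∀ e ∈ R, x ∉ e) :
    Two (swp T R A) x := by
  obtain ⟨y, z, hyz, hy, hz⟩ := h
  refine ⟨y, z, hyz, swp_adj.mpr (Or.inl ⟨hy, fun h => hR _ h ?_⟩),
    swp_adj.mpr (Or.inl ⟨hz, fun h => hR _ h ?_⟩)⟩ <;> simp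

lemma branch_two {b : V} (hb : 3 ≤ T.degree b) : Two T b := two_iff.mpr (by omega)

lemma lemmaA [Nontrivial V] (h : Ctx G T) {b c v : V} (hb : 3 ≤ T.degree b) (hbc : T.Adj b c)
    (hv : ¬ Two T v) (hs : T.dist v b < T.dist v c) (hG : G.Adj v c) : False := by
  have hT := h.tree
  have hvb : v ≠ b := by rintro rfl; exact hv (branch_two hb)
  have hvc : v ≠ c := hG.ne
  have hbc' : b ≠ c := hbc.ne
  have hnadj : ¬ T.Adj v c := by
    intro hh
    apply hvb
    refine toward_unique hT (x := v) hh.symm hbc.symm ?_ hs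
    rw [dist_self]; exact dpos hT hvc
  have htree : (swp T {s(b, c)} {s(v, c)}).IsTree := by
    have key : (swp T {s(b, c)} {s(v, c)}).Reachable b c := by
      have h1 : (swp T {s(b, c)} {s(v, c)}).Reachable v b := by
        apply swp_geo hT
        intro e he
        rw [Finset.mem_singleton] at he; subst he
        exact ⟨c, by simp, by omega⟩
      have h2 : (swp T {s(b, c)} {s(v, c)}).Adj v c := swp_adj.mpr (Or.inr ⟨by simp, hvc⟩)
      exact h1.symm.trans h2.reachable
    apply swp_tree hT
    · simpa using hbc
    · simp
    · intro x y hxy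
      rw [Finset.mem_singleton, Sym2.eq_iff] at hxy
      rcases hxy with ⟨rfl, rfl⟩ | ⟨rfl, rfl⟩
      · exact key
      · exact key.symm
  have hle : swp T {s(b, c)} {s(v, c)} ≤ G := swp_le h.le (by simpa using hG)
  have := h.c1 _ hle htree
  refine absurd (leaf_drop hT htree hv ?_ ?_) (not_lt.mpr this)
  · obtain ⟨q, hq⟩ := leaf_nbr hT v
    refine ⟨q, c, ?_, ?_, ?_⟩
    · rintro rfl; exact hnadj hq
    · rw [swp_adj]; left; refine ⟨hq, ?_⟩; simp [Sym2.eq_iff]; tauto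
    · rw [swp_adj]; right; simp [hvc]
  · intro x hx
    by_cases e1 : x = b
    · subst e1
      obtain ⟨a, d, had, hac, hdc, ha, hd⟩ := three_two hb c
      refine ⟨a, d, had, ?_, ?_⟩
      · rw [swp_adj]; left; refine ⟨ha, ?_⟩; simp [Sym2.eq_iff]; tauto
      · rw [swp_adj]; left; refine ⟨hd, ?_⟩; simp [Sym2.eq_iff]; tauto
    by_cases e2 : x = c
    · subst e2
      obtain ⟨a, hab, ha⟩ := two_one hx b
      refine ⟨a, v, ?_, ?_, ?_⟩
      · rintro rfl; exact hnadj ha.symm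
      · rw [swp_adj]; left; refine ⟨ha, ?_⟩; simp [Sym2.eq_iff]; tauto
      · rw [swp_adj]; right; simp [hvc.symm, Sym2.eq_iff]
    · exact two_keep hx (by simp; tauto)

/-- A path with a leaf start without branch vertices: all neighbours of non-final vertices
lie on it. -/
lemma path_closed {x w : V} (p : T.Walk x w) (hp : p.IsPath) (hx : ¬ Two T x)
    (hnb : ∀ y ∈ p.support, ¬ 3 ≤ T.degree y) {y z : V} (hy : y ∈ p.support) (hyw : y ≠ w)
    (hyz : T.Adj y z) : z ∈ p.support := by
  obtain ⟨i, rfl, hi⟩ := Walk.mem_support_iff_exists_getVert.mp hy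
  have hi' : i < p.length := by
    rcases hi.lt_or_eq with h | h
    · exact h
    · subst h; simp at hyw
  have hs := p.adj_getVert_succ hi'
  by_contra hz
  by_cases h0 : i = 0
  · subst h0
    rw [Walk.getVert_zero] at hyz hs
    refine hx ⟨z, p.getVert 1, ?_, hyz, hs⟩
    rintro rfl; exact hz (p.getVert_mem_support _)
  · obtain ⟨j, rfl⟩ := Nat.exists_eq_succ_of_ne_zero h0
    have hpre := p.adj_getVert_succ (show j < p.length by omega)
    refine hnb _ hy (three_of (a := z) (b := p.getVert j) (c := p.getVert (j+1+1)) ?_ ?_ ?_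
      hyz hpre.symm hs)
    · rintro rfl; exact hz (p.getVert_mem_support _)
    · rintro rfl; exact hz (p.getVert_mem_support _)
    · intro heq
      have := hp.getVert_injOn (by simp; omega) (by simp; omega) heq
      omega

/-- branch vertex between two leaves -/
lemma ex_branch_between [Nontrivial V] (hT : T.IsTree) {u v b0 : V} (hu : ¬ Two T u)
    (hv : ¬ Two T v) (huv : u ≠ v) (hb0 : 3 ≤ T.degree b0) :
    ∃ b, 3 ≤ T.degree b ∧ T.dist u b + T.dist b v = T.dist u v := by
  obtain ⟨p, hp, hlen⟩ := hT.connected.exists_path_of_dist u v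
  by_contra hcon
  have hnb : ∀ y ∈ p.support, ¬ 3 ≤ T.degree y := by
    intro y hy h3
    refine hcon ⟨y, h3, ?_⟩
    have h1 := T.dist_le (p.takeUntil y hy)
    have h2 := T.dist_le (p.dropUntil y hy)
    have h3 := congrArg Walk.length (p.take_spec hy)
    rw [Walk.length_append] at h3
    have := dtri hT u y v
    omega
  have hclosed : ∀ y z, y ∈ p.support → T.Adj y z → z ∈ p.support := by
    intro y z hy hyz
    by_cases hyv : y = v
    · subst hyv
      have h1 : y ∈ p.reverse.support := by simp
      have := path_closed p.reverse hp.reverse hv (by simpa using hnb) h1 huv.symm hyz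
      simpa using this
    · exact path_closed p hp hu hnb hy hyv hyz
  obtain ⟨w⟩ := hT.connected u b0
  have : ∀ {a b : V} (w : T.Walk a b), a ∈ p.support → b ∈ p.support := by
    intro a b w
    induction w with
    | nil => exact id
    | cons hadj q ih => exact fun ha => ih (hclosed _ _ ha hadj)
  exact hnb b0 (this w (by simp)) hb0

lemma lemmaB [Nontrivial V] (h : Ctx G T) {u v b0 : V} (hb0 : 3 ≤ T.degree b0) (hu : ¬ Two T u)
    (hv : ¬ Two T v) (hG : G.Adj u v) : False := by
  have hT := h.tree
  have huv : u ≠ v := hG.ne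
  obtain ⟨b, hb, hd⟩ := ex_branch_between hT hu hv huv hb0
  have hub : u ≠ b := by rintro rfl; exact hu (branch_two hb)
  have hvb : v ≠ b := by rintro rfl; exact hv (branch_two hb)
  obtain ⟨c, hbc, hdc⟩ := ex_toward hT hvb
  have hbc' : b ≠ c := hbc.ne
  have huc : T.dist u b < T.dist u c := by
    have h1 := dtri hT u c v
    have h2 := dstep hT u hbc
    rw [T.dist_comm (u := v), T.dist_comm (u := v)] at hdc
    omega
  by_cases hcv : c = v
  · subst hcv; exact lemmaA h hb hbc hu huc hG
  have huc' : u ≠ c := by rintro rfl; simp at huc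
  have htree : (swp T {s(b, c)} {s(u, v)}).IsTree := by
    have key : (swp T {s(b, c)} {s(u, v)}).Reachable b c := by
      have h1 : (swp T {s(b, c)} {s(u, v)}).Reachable u b := by
        apply swp_geo hT
        intro e he
        rw [Finset.mem_singleton] at he; subst he
        exact ⟨c, by simp, by omega⟩
      have h3 : (swp T {s(b, c)} {s(u, v)}).Reachable v c := by
        apply swp_geo hT
        intro e he
        rw [Finset.mem_singleton] at he; subst he
        exact ⟨b, by simp, by omega⟩
      have h2 : (swp T {s(b, c)} {s(u, v)}).Adj u v := swp_adj.mpr (Or.inr ⟨by simp, huv⟩)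
      exact (h1.symm.trans h2.reachable).trans h3
    apply swp_tree hT
    · simpa using hbc
    · simp
    · intro x y hxy
      rw [Finset.mem_singleton, Sym2.eq_iff] at hxy
      rcases hxy with ⟨rfl, rfl⟩ | ⟨rfl, rfl⟩
      · exact key
      · exact key.symm
  have hle : swp T {s(b, c)} {s(u, v)} ≤ G := swp_le h.le (by simpa using hG)
  have := h.c1 _ hle htree
  have hnadj : ¬ T.Adj u v := by
    intro hh
    have h1 := dist_eq_one_iff_adj.mpr hh
    have h2 := dpos hT hub
    have h3 := dpos hT hvb.symm
    omega
  refine absurd (leaf_drop2 (z := c) hT htree huv hu hv ?_ ?_ ?_) (not_lt.mpr this)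
  · obtain ⟨q, hq⟩ := leaf_nbr hT u
    refine ⟨q, v, ?_, ?_, ?_⟩
    · rintro rfl; exact hnadj hq
    · rw [swp_adj]; left; refine ⟨hq, ?_⟩; simp [Sym2.eq_iff]; tauto
    · rw [swp_adj]; right; simp [huv]
  · obtain ⟨q, hq⟩ := leaf_nbr hT v
    refine ⟨q, u, ?_, ?_, ?_⟩
    · rintro rfl; exact hnadj hq.symm
    · rw [swp_adj]; left; refine ⟨hq, ?_⟩; simp [Sym2.eq_iff]; tauto
    · rw [swp_adj]; right; simp [huv.symm, Sym2.eq_iff]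
  · intro x e2 hx
    by_cases e1 : x = b
    · subst e1
      obtain ⟨a, d, had, hac, hdc, ha, hd⟩ := three_two hb c
      refine ⟨a, d, had, ?_, ?_⟩
      · rw [swp_adj]; left; refine ⟨ha, ?_⟩; simp [Sym2.eq_iff]; tauto
      · rw [swp_adj]; left; refine ⟨hd, ?_⟩; simp [Sym2.eq_iff]; tauto
    · exact two_keep hx (by simp; tauto)

lemma lemmaC [Nontrivial V] (h : Ctx G T) {b p c v : V} (hb : 3 ≤ T.degree b) (hbp : T.Adj b p)
    (hbc : T.Adj b c) (hcp : c ≠ p) (hv : ¬ Two T v) (hvp : v ≠ p)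
    (hs : T.dist v p < T.dist v b) (hG : G.Adj v b) : ¬ G.Adj c p := by
  intro hGcp
  have hT := h.tree
  have hvb : v ≠ b := hG.ne
  have hnadj : ¬ T.Adj b v := by
    intro hh
    apply hvp
    refine toward_unique hT (x := v) hh hbp ?_ hs
    rw [dist_self]; exact dpos hT hvb
  have hvc : v ≠ c := by rintro rfl; exact hnadj hbc
  have hbp' : b ≠ p := hbp.ne
  have hbc' : b ≠ c := hbc.ne
  have hcpT : ¬ T.Adj c p := no_tri hT hbc hbp
  set R : Finset (Sym2 V) := {s(b, p), s(b, c)} with hR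
  set A : Finset (Sym2 V) := {s(c, p), s(b, v)} with hA
  have htree : (swp T R A).IsTree := by
    have h1 : (swp T R A).Reachable v p := by
      apply swp_geo hT
      intro e he
      rw [hR, Finset.mem_insert, Finset.mem_singleton] at he
      rcases he with rfl | rfl
      · exact ⟨b, by simp, by omega⟩
      · exact ⟨b, by simp, by omega⟩
    have h2 : (swp T R A).Adj b v := swp_adj.mpr (Or.inr ⟨by simp [hA], hvb.symm⟩)
    have h3 : (swp T R A).Adj p c :=
      swp_adj.mpr (Or.inr ⟨by simp [hA, Sym2.eq_iff], hcp.symm⟩)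
    have k1 := h2.reachable.trans h1
    have k2 := k1.trans h3.reachable
    apply swp_tree hT
    · simp [hR, hbp, hbc]
    · have c1 : R.card = 2 := Finset.card_pair (by simp [Sym2.eq_iff]; tauto)
      have c2 : A.card ≤ 2 := Finset.card_le_two
      omega
    · intro x y hxy
      rw [hR, Finset.mem_insert, Finset.mem_singleton, Sym2.eq_iff, Sym2.eq_iff] at hxy
      rcases hxy with (⟨rfl, rfl⟩ | ⟨rfl, rfl⟩) | (⟨rfl, rfl⟩ | ⟨rfl, rfl⟩)
      · exact k1
      · exact k1.symm
      · exact k2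
      · exact k2.symm
  have hle : swp T R A ≤ G := swp_le h.le (by simp [hA, hGcp, hG.symm])
  have := h.c1 _ hle htree
  refine absurd (leaf_drop hT htree hv ?_ ?_) (not_lt.mpr this)
  · obtain ⟨q, hq⟩ := leaf_nbr hT v
    refine ⟨q, b, ?_, ?_, ?_⟩
    · rintro rfl; exact hnadj hq.symm
    · rw [swp_adj]; left; refine ⟨hq, ?_⟩; simp [hR, Sym2.eq_iff]; tauto
    · rw [swp_adj]; right; simp [hA, hvb, Sym2.eq_iff]
  · intro x hx
    by_cases e1 : x = b
    · subst e1
      obtain ⟨a, hac, hap, ha⟩ := three_one hb c p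
      refine ⟨a, v, ?_, ?_, ?_⟩
      · rintro rfl; exact hnadj ha
      · rw [swp_adj]; left; refine ⟨ha, ?_⟩; simp [hR, Sym2.eq_iff]; tauto
      · rw [swp_adj]; right; simp [hA, hvb.symm]
    by_cases e2 : x = c
    · subst e2
      obtain ⟨a, hab, ha⟩ := two_one hx b
      refine ⟨a, p, ?_, ?_, ?_⟩
      · rintro rfl; exact hcpT ha
      · rw [swp_adj]; left; refine ⟨ha, ?_⟩; simp [hR, Sym2.eq_iff]; tauto
      · rw [swp_adj]; right; simp [hA, hcp]
    by_cases e3 : x = p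
    · subst e3
      obtain ⟨a, hab, ha⟩ := two_one hx b
      refine ⟨a, c, ?_, ?_, ?_⟩
      · rintro rfl; exact hcpT ha.symm
      · rw [swp_adj]; left; refine ⟨ha, ?_⟩; simp [hR, Sym2.eq_iff]; tauto
      · rw [swp_adj]; right; simp [hA, hcp.symm, Sym2.eq_iff]
    · exact two_keep hx (by simp [hR]; tauto)

lemma deg1_iff [Nontrivial V] {H : SimpleGraph V} (hH : H.IsTree) {x : V} :
    H.degree x = 1 ↔ ¬ Two H x := by
  rw [← leaf_iff hH]; simp [leafSet]

lemma path_inner {H : SimpleGraph V} {x w y : V} (P : H.Walk x w) (hP : P.IsPath)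
    (hy : y ∈ P.support) (hyx : y ≠ x) (hyw : y ≠ w) :
    ∃ a c, a ≠ c ∧ H.Adj y a ∧ H.Adj y c ∧ a ∈ P.support ∧ c ∈ P.support := by
  obtain ⟨i, rfl, hi⟩ := Walk.mem_support_iff_exists_getVert.mp hy
  have hi' : i < P.length := by
    rcases hi.lt_or_eq with h | h
    · exact h
    · subst h; simp at hyw
  have h0 : i ≠ 0 := by rintro rfl; simp at hyx
  obtain ⟨j, rfl⟩ := Nat.exists_eq_succ_of_ne_zero h0
  have hs := P.adj_getVert_succ hi'
  have hpre := P.adj_getVert_succ (show j < P.length by omega)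
  refine ⟨P.getVert j, P.getVert (j+1+1), ?_, hpre.symm, hs, P.getVert_mem_support _,
    P.getVert_mem_support _⟩
  intro heq
  have := hP.getVert_injOn (by simp; omega) (by simp; omega) heq
  omega

/-- `p` next to branch `b` in direction to a branch vertex lies in the reducible stem -/
lemma stem_mem (hT : T.IsTree) {b p b' x0 : V} (hb : 3 ≤ T.degree b) (hb' : 3 ≤ T.degree b')
    (hbp : T.Adj b p) (hs : T.dist b' p < T.dist b' b) (hx0 : ¬ Two T x0)
    (P : T.Walk x0 p) (hP : P.IsPath) (hnb : ∀ y ∈ P.support, ¬ 3 ≤ T.degree y) : False := by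
  have hpb' : b' ≠ p := by rintro rfl; exact hnb _ (by simp) hb'
  obtain ⟨p2, hp2, hd⟩ := ex_toward hT hpb'
  have hp2b : p2 ≠ b := by rintro rfl; omega
  have hx0p : x0 ≠ p := by rintro rfl; exact hx0 ⟨p2, b, hp2b, hp2, hbp.symm⟩
  have hbQ : b ∉ P.support := fun h => hnb b h hb
  have hpen : T.Adj p P.penultimate :=
    (P.adj_penultimate (Walk.not_nil_of_ne hx0p)).symm
  have hpenQ : P.penultimate ∈ P.support := P.getVert_mem_support _
  have hclosed : ∀ y z, y ∈ P.support → T.Adj y z → z ∈ P.support ∨ z = b := by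
    intro y z hy hyz
    by_cases hyp : y = p
    · subst hyp
      by_contra hcon
      push Not at hcon
      refine hnb _ hy (three_of (a := z) (b := b) (c := P.penultimate) hcon.2 ?_ ?_ hyz
        hbp.symm hpen)
      · intro h; exact hcon.1 (h ▸ hpenQ)
      · intro h; exact hbQ (h ▸ hpenQ)
    · exact Or.inl (path_closed P hP hx0 hnb hy hyp hyz)
  have hall : ∀ n y, T.dist y p = n → T.dist y p < T.dist y b → y ∈ P.support := by
    intro n
    induction n with
    | zero =>
      intro y hy _
      rw [hT.connected.dist_eq_zero_iff.mp hy]; simp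
    | succ n ih =>
      intro y hy hyb
      have hne : p ≠ y := by rintro rfl; simp at hy
      obtain ⟨y', hy', hd'⟩ := ex_toward hT hne
      rw [T.dist_comm (u := p), T.dist_comm (u := p)] at hd'
      have h1 := dtri hT y y' b
      rw [dist_eq_one_iff_adj.mpr hy'] at h1
      rcases hclosed y' y (ih y' (by omega) (by omega)) hy'.symm with h | h
      · exact h
      · subst h; simp at hyb
  exact hnb b' (hall _ b' rfl hs) hb'

set_option maxHeartbeats 4000000 in
lemma lemmaD [Nontrivial V] (h : Ctx G T)
    (hC2 : ∀ T' : SimpleGraph V, T' ≤ G → T'.IsTree →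
      (leafSet T').card = (leafSet T).card → rstemCard T' ≤ rstemCard T)
    {b p v b' : V} (hb : 3 ≤ T.degree b) (hb' : 3 ≤ T.degree b')
    (hbp : T.Adj b p) (hsb : T.dist b' p < T.dist b' b) (hv : ¬ Two T v)
    (hs : T.dist v p < T.dist v b) (hGb : G.Adj v b) (hGp : G.Adj v p) : False := by
  have hT := h.tree
  have hp3 : ¬ 3 ≤ T.degree p := fun hp => lemmaA h hp hbp.symm hv hs hGb
  have hpb' : b' ≠ p := by rintro rfl; exact hp3 hb'
  obtain ⟨p2, hp2, hd⟩ := ex_toward hT hpb'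
  have hp2b : p2 ≠ b := by rintro rfl; omega
  have hvb : v ≠ b := hGb.ne
  have hvp : v ≠ p := hGp.ne
  have hbpne : b ≠ p := hbp.ne
  have hvp2 : v ≠ p2 := by
    rintro rfl
    by_cases e : b' = v
    · subst e; exact hv (branch_two hb')
    · obtain ⟨p3, hp3, hd3⟩ := ex_toward hT e
      refine hv ⟨p3, p, ?_, hp3, hp2.symm⟩
      rintro rfl; omega
  obtain ⟨q, hq⟩ := leaf_nbr hT v
  have hqu : ∀ y, T.Adj v y → y = q := by
    intro y hy
    by_contra hne
    exact hv ⟨y, q, hne, hy, hq⟩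
  have hqp : q ≠ p := by
    rintro rfl
    exact hp3 (three_of hvb hvp2 hp2b.symm hq.symm hbp.symm hp2)
  have hnadj : ¬ T.Adj b v := by
    intro hh
    apply hvp
    refine toward_unique hT (x := v) hh hbp ?_ hs
    rw [dist_self]; exact dpos hT hvb
  have hqb : q ≠ b := by rintro rfl; exact hnadj hq.symm
  have hvq : v ≠ q := hq.ne
  have hdq : T.dist v p = T.dist q p + 1 := by
    obtain ⟨q', hq', hd'⟩ := ex_toward hT hvp.symm
    rw [hqu _ hq'] at hd'
    rw [T.dist_comm (u := v), T.dist_comm (u := q)]; exact hd'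
  have hqb' : T.dist q p < T.dist q b := by
    have h1 := dtri hT v q b
    rw [dist_eq_one_iff_adj.mpr hq] at h1
    omega
  set R : Finset (Sym2 V) := {s(v, q), s(b, p)} with hR
  set A : Finset (Sym2 V) := {s(b, v), s(v, p)} with hA
  have avb : (swp T R A).Adj v b := swp_adj.mpr (Or.inr ⟨by simp [hA, Sym2.eq_iff], hvb⟩)
  have avp : (swp T R A).Adj v p := swp_adj.mpr (Or.inr ⟨by simp [hA], hvp⟩)
  have htree : (swp T R A).IsTree := by
    have h1 : (swp T R A).Reachable q p := by
      apply swp_geo hT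
      intro e he
      rw [hR, Finset.mem_insert, Finset.mem_singleton] at he
      rcases he with rfl | rfl
      · exact ⟨v, by simp, by omega⟩
      · exact ⟨b, by simp, by omega⟩
    have k1 := avb.symm.reachable.trans avp.reachable
    have k2 := avp.reachable.trans h1.symm
    apply swp_tree hT
    · simp [hR, hbp, hq]
    · have c1 : R.card = 2 := Finset.card_pair (by simp [Sym2.eq_iff]; tauto)
      have c2 : A.card ≤ 2 := Finset.card_le_two
      omega
    · intro x y hxy
      rw [hR, Finset.mem_insert, Finset.mem_singleton, Sym2.eq_iff, Sym2.eq_iff] at hxy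
      rcases hxy with (⟨rfl, rfl⟩ | ⟨rfl, rfl⟩) | (⟨rfl, rfl⟩ | ⟨rfl, rfl⟩)
      · exact k2
      · exact k2.symm
      · exact k1
      · exact k1.symm
  have hle : swp T R A ≤ G := swp_le h.le (by simp [hA, hGp, hGb.symm])
  have hc1 := h.c1 _ hle htree
  have hvT' : Two (swp T R A) v := ⟨b, p, hbpne, avb, avp⟩
  have hvn : ∀ y, (swp T R A).Adj v y → y = b ∨ y = p := by
    intro y hy
    rw [swp_adj] at hy
    rcases hy with ⟨h1, h2⟩ | ⟨h1, h2⟩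
    · rw [hqu y h1] at h2; simp [hR] at h2
    · simp [hA, Sym2.eq_iff] at h1; tauto
  have hold : ∀ y z, y ≠ v → z ≠ v → (swp T R A).Adj y z → T.Adj y z := by
    intro y z hy hz hyz
    rw [swp_adj] at hyz
    rcases hyz with ⟨h1, h2⟩ | ⟨h1, h2⟩
    · exact h1
    · exfalso; simp [hA, Sym2.eq_iff] at h1; tauto
  have hkeep : ∀ x, x ≠ q → Two T x → Two (swp T R A) x := by
    intro x e2 hx
    by_cases e1 : x = b
    · subst e1
      obtain ⟨a, hap, ha⟩ := two_one hx p
      refine ⟨a, v, ?_, ?_, avb.symm⟩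
      · rintro rfl; exact hnadj ha
      · rw [swp_adj]; left; refine ⟨ha, ?_⟩; simp [hR, Sym2.eq_iff]; tauto
    by_cases e3 : x = p
    · subst e3
      obtain ⟨a, hab, ha⟩ := two_one hx b
      refine ⟨a, v, ?_, ?_, avp.symm⟩
      · rintro rfl; exact hqp (hqu _ ha.symm).symm
      · rw [swp_adj]; left; refine ⟨ha, ?_⟩; simp [hR, Sym2.eq_iff]; tauto
    by_cases e4 : x = v
    · subst e4; exact absurd hx hv
    · exact two_keep hx (by simp [hR]; tauto)
  have hsub := leaf_sub hT htree hvT' hkeep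
  have hcard : (insert q ((leafSet T).erase v)).card ≤ (leafSet T).card := by
    have h2 := Finset.card_insert_le q ((leafSet T).erase v)
    have h5 := Finset.card_erase_add_one ((leaf_iff hT).mpr hv)
    omega
  have hLeq := Finset.eq_of_subset_of_card_le hsub (hcard.trans hc1)
  have hLcard : (leafSet (swp T R A)).card = (leafSet T).card :=
    le_antisymm ((Finset.card_le_card hsub).trans hcard) hc1
  have hq3 : ¬ 3 ≤ T.degree q := by
    intro hq3
    have hqL : q ∈ leafSet (swp T R A) := by rw [hLeq]; simp
    refine (leaf_iff htree).mp hqL ?_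
    obtain ⟨a, d, had, hav, hdv, ha, hd⟩ := three_two hq3 v
    refine ⟨a, d, had, ?_, ?_⟩
    · rw [swp_adj]; left; refine ⟨ha, ?_⟩; simp [hR, Sym2.eq_iff]; tauto
    · rw [swp_adj]; left; refine ⟨hd, ?_⟩; simp [hR, Sym2.eq_iff]; tauto
  have hv3 : ¬ 3 ≤ T.degree v := fun h3 => hv (branch_two h3)
  have hbr : ∀ y, 3 ≤ T.degree y → 3 ≤ (swp T R A).degree y := by
    intro y hy
    have e1 : y ≠ q := by rintro rfl; exact hq3 hy
    have e2 : y ≠ v := by rintro rfl; exact hv3 hy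
    have e3 : y ≠ p := by rintro rfl; exact hp3 hy
    by_cases e4 : y = b
    · subst e4
      obtain ⟨a, d, had, hav, hdv, ha, hd⟩ := three_two hy p
      refine three_of (a := a) (b := d) (c := v) had ?_ ?_ ?_ ?_ avb.symm
      · rintro rfl; exact hnadj ha
      · rintro rfl; exact hnadj hd
      · rw [swp_adj]; left; refine ⟨ha, ?_⟩; simp [hR, Sym2.eq_iff]; tauto
      · rw [swp_adj]; left; refine ⟨hd, ?_⟩; simp [hR, Sym2.eq_iff]; tauto
    · obtain ⟨a, d, f, h1, h2, h3, ha, hd, hf⟩ := three_ex hy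
      refine three_of (a := a) (b := d) (c := f) h1 h2 h3 ?_ ?_ ?_
      · rw [swp_adj]; left; refine ⟨ha, ?_⟩; simp [hR, Sym2.eq_iff]; tauto
      · rw [swp_adj]; left; refine ⟨hd, ?_⟩; simp [hR, Sym2.eq_iff]; tauto
      · rw [swp_adj]; left; refine ⟨hf, ?_⟩; simp [hR, Sym2.eq_iff]; tauto
  -- transfer of paths
  have K : ∀ (x w : V) (P : (swp T R A).Walk x w), P.IsPath → ¬ Two (swp T R A) x →
      (∀ y ∈ P.support, ¬ 3 ≤ (swp T R A).degree y) → v ∉ P.support →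
      ∃ (x0 : V) (P0 : T.Walk x0 w), P0.IsPath ∧ ¬ Two T x0 ∧
        ∀ y ∈ P0.support, ¬ 3 ≤ T.degree y := by
    intro x w P hP hx hnb hvP
    have hedges : ∀ e ∈ P.edges, e ∈ T.edgeSet := by
      intro e
      induction e with
      | _ y z =>
        intro he
        refine hold y z ?_ ?_ (P.adj_of_mem_edges he)
        · rintro rfl; exact hvP (P.fst_mem_support_of_mem_edges he)
        · rintro rfl; exact hvP (P.snd_mem_support_of_mem_edges he)
    have hxL : x ∈ insert q ((leafSet T).erase v) := by
      rw [← hLeq]; exact (leaf_iff htree).mpr hx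
    rw [Finset.mem_insert, Finset.mem_erase] at hxL
    rcases hxL with hxq | ⟨_, hxL⟩
    · subst hxq
      refine ⟨v, Walk.cons hq (P.transfer T hedges), ?_, hv, ?_⟩
      · rw [Walk.cons_isPath_iff]
        exact ⟨hP.transfer hedges, by rwa [Walk.support_transfer]⟩
      · intro y hy
        rw [Walk.support_cons, List.mem_cons, Walk.support_transfer] at hy
        rcases hy with rfl | hy
        · exact hv3
        · exact fun h3 => hnb y hy (hbr y h3)
    · refine ⟨x, P.transfer T hedges, hP.transfer hedges, (leaf_iff hT).mp hxL, ?_⟩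
      intro y hy
      rw [Walk.support_transfer] at hy
      exact fun h3 => hnb y hy (hbr y h3)
  have hlt : rstemCard T < rstemCard (swp T R A) := by
    unfold rstemCard
    apply Set.ncard_lt_ncard _ (Set.toFinite _)
    rw [Set.ssubset_iff_of_subset]
    · refine ⟨v, ?_, ?_⟩
      · intro x hx P hP
        rw [deg1_iff htree] at hx
        by_contra hcon
        push Not at hcon
        have hnb : ∀ y ∈ P.support, ¬ 3 ≤ (swp T R A).degree y :=
          fun y hy => not_le.mpr (hcon y hy)
        have hxv : x ≠ v := by rintro rfl; exact hx hvT'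
        have hpen := (P.adj_penultimate (Walk.not_nil_of_ne hxv)).symm
        have hpenQ : P.penultimate ∈ P.support := P.getVert_mem_support _
        have hpenp : P.penultimate = p := by
          rcases hvn _ hpen with h1 | h1
          · rw [h1] at hpenQ
            exact absurd (hbr b hb) (hnb b hpenQ)
          · exact h1
        rw [hpenp] at hpenQ
        obtain ⟨x0, P0, hP0, hx0, hn0⟩ := K x p (P.takeUntil p hpenQ) (hP.takeUntil hpenQ) hx
          (fun y hy => hnb y (P.support_takeUntil_subset_support hpenQ hy))
          (Walk.endpoint_notMem_support_takeUntil hP hpenQ hvp)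
        exact stem_mem hT hb hb' hbp hsb hx0 P0 hP0 hn0
      · intro hmem
        obtain ⟨w, hw, h3⟩ := hmem v ((deg1_iff hT).mpr hv) Walk.nil Walk.IsPath.nil
        rw [Walk.support_nil, List.mem_singleton] at hw
        subst hw; exact hv3 h3
    · intro w hw x hx P hP
      rw [deg1_iff htree] at hx
      by_contra hcon
      push Not at hcon
      have hnb : ∀ y ∈ P.support, ¬ 3 ≤ (swp T R A).degree y :=
        fun y hy => not_le.mpr (hcon y hy)
      have hxv : v ≠ x := by rintro rfl; exact hx hvT'
      have hwv : v ≠ w := by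
        rintro rfl
        obtain ⟨w, hw, h3⟩ := hw v ((deg1_iff hT).mpr hv) Walk.nil Walk.IsPath.nil
        rw [Walk.support_nil, List.mem_singleton] at hw
        subst hw; exact hv3 h3
      have hvP : v ∉ P.support := by
        intro hvP
        obtain ⟨a, c, hac, ha, hc, ha', hc'⟩ := path_inner P hP hvP hxv hwv
        have hbP : b ∈ P.support := by
          rcases hvn _ ha with rfl | rfl
          · exact ha'
          · rcases hvn _ hc with rfl | rfl
            · exact hc'
            · exact absurd rfl hac
        exact hnb b hbP (hbr b hb)
      obtain ⟨x0, P0, hP0, hx0, hn0⟩ := K x w P hP hx hnb hvP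
      obtain ⟨y, hy, h3⟩ := hw x0 ((deg1_iff hT).mpr hx0) P0 hP0
      exact hn0 y hy h3
  exact absurd (hC2 _ hle htree hLcard) (not_le.mpr hlt)

lemma beyond [Nontrivial V] (hT : T.IsTree) {b b' p v : V} (hb : 3 ≤ T.degree b)
    (hb' : 3 ≤ T.degree b') (hne : b ≠ b')
    (hnb : ∀ w, w ≠ b → w ≠ b' → T.dist b w + T.dist w b' = T.dist b b' → ¬ 3 ≤ T.degree w)
    (hbp : T.Adj b p) (hpb' : T.dist b' p < T.dist b' b) (hv : ¬ Two T v)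
    (hs : T.dist v p < T.dist v b) : T.dist b b' + T.dist b' v = T.dist b v := by
  have cm : ∀ x y, T.dist x y = T.dist y x := fun x y => T.dist_comm
  have h1 : T.dist b p = 1 := dist_eq_one_iff_adj.mpr hbp
  have hpmem : p ∈ (Finset.univ.filter fun w => T.dist b w + T.dist w b' = T.dist b b' ∧
      T.dist b w + T.dist w v = T.dist b v) := by
    rw [Finset.mem_filter]
    have e1 := dtri hT b p b'
    have e2 := dtri hT b p v
    have := cm b' p; have := cm b' b; have := cm v p; have := cm v b
    refine ⟨Finset.mem_univ _, ?_, ?_⟩ <;> omega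
  obtain ⟨w, hw, hmax⟩ := Finset.exists_max_image _ (fun w => T.dist b w) ⟨p, hpmem⟩
  have hwp : T.dist b p ≤ T.dist b w := hmax p hpmem
  rw [Finset.mem_filter] at hw
  obtain ⟨-, hw1, hw2⟩ := hw
  by_cases e1 : w = b'
  · subst e1; exact hw2
  exfalso
  have e2 : w ≠ b := by rintro rfl; rw [dist_self] at hwp; omega
  obtain ⟨c1, hc1, hd1⟩ := ex_toward hT (x := b) (b := w) e2.symm
  obtain ⟨c2, hc2, hd2⟩ := ex_toward hT (x := b') (b := w) (Ne.symm e1)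
  have n12 : c1 ≠ c2 := by
    rintro rfl
    have := dtri hT b c1 b'
    have := cm b' c1; have := cm b' w
    omega
  have e3 : w ≠ v := by rintro rfl; exact hv ⟨c1, c2, n12, hc1, hc2⟩
  obtain ⟨c3, hc3, hd3⟩ := ex_toward hT (x := v) (b := w) e3.symm
  have n13 : c1 ≠ c3 := by
    rintro rfl
    have := dtri hT b c1 v
    have := cm v c1; have := cm v w
    omega
  have n23 : c2 ≠ c3 := by
    rintro rfl
    have t1 := dtri hT b c2 b'
    have t2 := dtri hT b w c2
    have t3 := dtri hT b c2 v
    rw [dist_eq_one_iff_adj.mpr hc2] at t2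
    have := cm v c2; have := cm v w; have := cm b' c2; have := cm b' w
    have : T.dist b c2 ≤ T.dist b w := hmax c2 (by
      rw [Finset.mem_filter]
      refine ⟨Finset.mem_univ _, ?_, ?_⟩ <;> omega)
    omega
  exact hnb w e2 e1 hw1 (three_of n12 n13 n23 hc1 hc2 hc3)

set_option maxHeartbeats 4000000 in
lemma lemmaE [Nontrivial V] (h : Ctx G T) (hK : K14Free G)
    (hC2 : ∀ T' : SimpleGraph V, T' ≤ G → T'.IsTree →
      (leafSet T').card = (leafSet T).card → rstemCard T' ≤ rstemCard T)
    {b b' p v1 v2 : V} (hb : 3 ≤ T.degree b) (hb' : 3 ≤ T.degree b') (hne : b ≠ b')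
    (hbp : T.Adj b p) (hpb' : T.dist b' p < T.dist b' b)
    (hv1 : ¬ Two T v1) (hv2 : ¬ Two T v2) (hG1 : G.Adj v1 b') (hG2 : G.Adj v2 b)
    (h1 : T.dist b' b + T.dist b v1 = T.dist b' v1)
    (h2 : T.dist b b' + T.dist b' v2 = T.dist b v2) : False := by
  have hT := h.tree
  have cm : ∀ x y, T.dist x y = T.dist y x := fun x y => T.dist_comm
  have d1 : ∀ {x y}, T.Adj x y → T.dist x y = 1 := fun hh => dist_eq_one_iff_adj.mpr hh
  have n1b : v1 ≠ b := by rintro rfl; exact hv1 (branch_two hb)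
  have n1b' : v1 ≠ b' := by rintro rfl; exact hv1 (branch_two hb')
  have n2b : v2 ≠ b := by rintro rfl; exact hv2 (branch_two hb)
  have n2b' : v2 ≠ b' := by rintro rfl; exact hv2 (branch_two hb')
  have q0 := dpos hT hne
  have q1 := dpos hT n1b
  have q2 := dpos hT n2b'
  have m1 := cm b b'
  have m2 := cm b v1
  have m3 := cm b' v1
  have m4 := cm b v2
  have m5 := cm b' v2
  have n12 : v1 ≠ v2 := by rintro rfl; omega
  have hs2 : T.dist v2 p < T.dist v2 b := by
    have := dtri hT v2 b' p
    omega
  have n2p : v2 ≠ p := by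
    rintro rfl
    have := d1 hbp
    omega
  obtain ⟨c, hc, hdc⟩ := ex_toward hT n1b
  have hb'c : T.dist b' c = T.dist b' b + 1 := by
    have := dtri hT b' c v1
    have := cm c v1
    rcases dstep hT b' hc <;> omega
  have ncp : c ≠ p := by rintro rfl; omega
  obtain ⟨d, ndc, ndp, hd⟩ := three_one hb c p
  have hb'd : T.dist b' d = T.dist b' b + 1 := by
    rcases dstep hT b' hd with h' | h'
    · exact absurd (toward_unique hT hd hbp (by omega) hpb') ndp
    · exact h'
  have h2c : T.dist v2 c = T.dist v2 b + 1 := by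
    rcases dstep hT v2 hc with h' | h'
    · exact absurd (toward_unique hT hc hbp (by omega) hs2) ncp
    · exact h'
  have h2d : T.dist v2 d = T.dist v2 b + 1 := by
    rcases dstep hT v2 hd with h' | h'
    · exact absurd (toward_unique hT hd hbp (by omega) hs2) ndp
    · exact h'
  have h1d : T.dist v1 d = T.dist v1 b + 1 := by
    rcases dstep hT v1 hd with h' | h'
    · exact absurd (toward_unique (x := v1) hT hd hc (by omega) (by omega)) ndc
    · exact h'
  have n2c : v2 ≠ c := by rintro rfl; simp at h2c
  have n2d : v2 ≠ d := by rintro rfl; simp at h2d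
  have n1d : v1 ≠ d := by rintro rfl; simp at h1d
  have ncb' : c ≠ b' := by rintro rfl; simp at hb'c
  have ndb' : d ≠ b' := by rintro rfl; simp at hb'd
  have nbc := hc.ne
  have nbd := hd.ne
  have nbp := hbp.ne
  have hGcd : G.Adj c d := by
    by_contra hcd
    refine hK ⟨b, p, c, d, v2, ncp.symm, ndp.symm, n2p.symm, ndc.symm, n2c.symm, n2d.symm,
      h.le hbp, h.le hc, h.le hd, hG2.symm, ?_, ?_, ?_, hcd, ?_, ?_⟩
    · exact fun hh => lemmaC h hb hbp hc ncp hv2 n2p hs2 hG2 hh.symm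
    · exact fun hh => lemmaC h hb hbp hd ndp hv2 n2p hs2 hG2 hh.symm
    · exact fun hh => lemmaD h hC2 hb hb' hbp hpb' hv2 hs2 hG2 hh.symm
    · exact fun hh => lemmaA h hb hc hv2 (by omega) hh.symm
    · exact fun hh => lemmaA h hb hd hv2 (by omega) hh.symm
  obtain ⟨z, hz, hdz⟩ := ex_toward hT n2b'
  have hbz : T.dist b z = T.dist b b' + 1 := by
    have := dtri hT b z v2
    have := cm z v2
    rcases dstep hT b hz <;> omega
  have nzb : z ≠ b := by rintro rfl; simp at hbz
  have nzb' : b' ≠ z := hz.ne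
  have n1z : v1 ≠ z := by
    rintro rfl
    have := d1 hz
    omega
  set R : Finset (Sym2 V) := {s(b, c), s(b, d), s(b', z)} with hR
  set A : Finset (Sym2 V) := {s(c, d), s(v1, b'), s(v2, b)} with hA
  have acd : (swp T R A).Adj c d := swp_adj.mpr (Or.inr ⟨by simp [hA], ndc.symm⟩)
  have a1 : (swp T R A).Adj v1 b' := swp_adj.mpr (Or.inr ⟨by simp [hA], n1b'⟩)
  have a2 : (swp T R A).Adj v2 b := swp_adj.mpr (Or.inr ⟨by simp [hA], n2b⟩)
  have m6 := cm c b'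
  have m7 := cm d b'
  have m8 := cm z b
  have m9 := cm c v1
  have m10 := cm z v2
  have rbb' : (swp T R A).Reachable b b' := by
    apply swp_geo hT
    intro e he
    simp only [hR, Finset.mem_insert, Finset.mem_singleton] at he
    rcases he with rfl | rfl | rfl
    · exact ⟨c, by simp, by omega⟩
    · exact ⟨d, by simp, by omega⟩
    · exact ⟨z, by simp, by omega⟩
  have rc1 : (swp T R A).Reachable c v1 := by
    apply swp_geo hT
    intro e he
    simp only [hR, Finset.mem_insert, Finset.mem_singleton] at he
    rcases he with rfl | rfl | rfl
    · exact ⟨b, by simp, by omega⟩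
    · exact ⟨b, by simp, by omega⟩
    · exact ⟨b', by simp, by omega⟩
  have rz2 : (swp T R A).Reachable z v2 := by
    apply swp_geo hT
    intro e he
    simp only [hR, Finset.mem_insert, Finset.mem_singleton] at he
    rcases he with rfl | rfl | rfl
    · exact ⟨b, by simp, by omega⟩
    · exact ⟨b, by simp, by omega⟩
    · exact ⟨b', by simp, by omega⟩
  have kbc : (swp T R A).Reachable b c := rbb'.trans (a1.symm.reachable.trans rc1.symm)
  have kbd : (swp T R A).Reachable b d := kbc.trans acd.reachable
  have kbz : (swp T R A).Reachable b' z := rbb'.symm.trans (a2.symm.reachable.trans rz2.symm)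
  have hle : swp T R A ≤ G := swp_le h.le (by simp [hA, hGcd, hG1, hG2])
  have htree : (swp T R A).IsTree := by
    apply swp_tree hT
    · simp [hR, hc, hd, hz]
    · have c1 : R.card = 3 := Finset.card_eq_three.mpr
        ⟨s(b, c), s(b, d), s(b', z), by simp [Sym2.eq_iff]; clear * - ndc nbc nbd; grind,
          by simp [Sym2.eq_iff]; clear * - hne nzb; grind,
          by simp [Sym2.eq_iff]; clear * - hne nzb; grind, rfl⟩
      have c2 : A.card ≤ 3 := Finset.card_le_three
      omega
    · intro x y hxy
      simp only [hR, Finset.mem_insert, Finset.mem_singleton, Sym2.eq_iff] at hxy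
      rcases hxy with (⟨rfl, rfl⟩ | ⟨rfl, rfl⟩) | (⟨rfl, rfl⟩ | ⟨rfl, rfl⟩) | (⟨rfl, rfl⟩ | ⟨rfl, rfl⟩)
      · exact kbc
      · exact kbc.symm
      · exact kbd
      · exact kbd.symm
      · exact kbz
      · exact kbz.symm
  have hnotR : ∀ x y, ¬ (x = b ∧ y = c) → ¬ (x = c ∧ y = b) → ¬ (x = b ∧ y = d) →
      ¬ (x = d ∧ y = b) → ¬ (x = b' ∧ y = z) → ¬ (x = z ∧ y = b') → s(x, y) ∉ R := by
    intro x y g1 g2 g3 g4 g5 g6 hmem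
    simp only [hR, Finset.mem_insert, Finset.mem_singleton, Sym2.eq_iff] at hmem
    clear * - g1 g2 g3 g4 g5 g6 hmem
    tauto
  have hstay : ∀ x y, T.Adj x y → s(x, y) ∉ R → (swp T R A).Adj x y :=
    fun x y ha hn => swp_adj.mpr (Or.inl ⟨ha, hn⟩)
  have hkeep : ∀ x, x ≠ z → Two T x → Two (swp T R A) x := by
    intro x hxz hx
    by_cases e1 : x = b
    · refine ⟨p, v2, n2p.symm, ?_, ?_⟩
      · rw [e1]
        refine hstay _ _ hbp (hnotR _ _ ?_ ?_ ?_ ?_ ?_ ?_)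
        · exact fun hh => ncp hh.2.symm
        · exact fun hh => nbc hh.1
        · exact fun hh => ndp hh.2.symm
        · exact fun hh => nbd hh.1
        · exact fun hh => hne hh.1
        · exact fun hh => nzb hh.1.symm
      · rw [e1]; exact a2.symm
    by_cases e2 : x = c
    · obtain ⟨a, hab, ha⟩ := two_one hx b
      rw [e2] at ha hxz ⊢
      refine ⟨a, d, ?_, ?_, acd⟩
      · rintro rfl; exact no_tri hT hc hd ha
      · refine hstay _ _ ha (hnotR _ _ ?_ ?_ ?_ ?_ ?_ ?_)
        · exact fun hh => nbc hh.1.symm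
        · exact fun hh => hab hh.2
        · exact fun hh => nbc hh.1.symm
        · exact fun hh => hab hh.2
        · exact fun hh => ncb' hh.1
        · exact fun hh => hxz hh.1
    by_cases e3 : x = d
    · obtain ⟨a, hab, ha⟩ := two_one hx b
      rw [e3] at ha hxz ⊢
      refine ⟨a, c, ?_, ?_, acd.symm⟩
      · rintro rfl; exact no_tri hT hd hc ha
      · refine hstay _ _ ha (hnotR _ _ ?_ ?_ ?_ ?_ ?_ ?_)
        · exact fun hh => nbd hh.1.symm
        · exact fun hh => hab hh.2
        · exact fun hh => nbd hh.1.symm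
        · exact fun hh => hab hh.2
        · exact fun hh => ndb' hh.1
        · exact fun hh => hxz hh.1
    by_cases e4 : x = b'
    · obtain ⟨a, a', haa, haz, haz', ha, ha'⟩ := three_two hb' z
      rw [e4]
      refine ⟨a, a', haa, hstay _ _ ha (hnotR _ _ ?_ ?_ ?_ ?_ ?_ ?_),
        hstay _ _ ha' (hnotR _ _ ?_ ?_ ?_ ?_ ?_ ?_)⟩
      · exact fun hh => hne hh.1.symm
      · exact fun hh => ncb' hh.1.symm
      · exact fun hh => hne hh.1.symm
      · exact fun hh => ndb' hh.1.symm
      · exact fun hh => haz hh.2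
      · exact fun hh => nzb' hh.1
      · exact fun hh => hne hh.1.symm
      · exact fun hh => ncb' hh.1.symm
      · exact fun hh => hne hh.1.symm
      · exact fun hh => ndb' hh.1.symm
      · exact fun hh => haz' hh.2
      · exact fun hh => nzb' hh.1
    · refine two_keep hx ?_
      intro e he hxe
      simp only [hR, Finset.mem_insert, Finset.mem_singleton] at he
      rcases he with rfl | rfl | rfl <;> rw [Sym2.mem_iff] at hxe
      · exact hxe.elim e1 e2
      · exact hxe.elim e1 e3
      · exact hxe.elim e4 hxz
  have ht1 : Two (swp T R A) v1 := by
    by_cases e : v1 = c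
    · refine ⟨d, b', ndb', ?_, a1⟩
      rw [e]; exact acd
    · obtain ⟨q, hq⟩ := leaf_nbr hT v1
      refine ⟨q, b', ?_, hstay _ _ hq (hnotR _ _ ?_ ?_ ?_ ?_ ?_ ?_), a1⟩
      · rintro rfl
        have := d1 hq
        omega
      · exact fun hh => n1b hh.1
      · exact fun hh => e hh.1
      · exact fun hh => n1b hh.1
      · exact fun hh => n1d hh.1
      · exact fun hh => n1b' hh.1
      · exact fun hh => n1z hh.1
  have hc1 := h.c1 _ hle htree
  by_cases e : z = v2
  · refine absurd (leaf_drop hT htree hv1 ht1 ?_) (not_lt.mpr hc1)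
    intro x hx
    refine hkeep x ?_ hx
    rintro rfl
    exact hv2 (e ▸ hx)
  · have ht2 : Two (swp T R A) v2 := by
      obtain ⟨q, hq⟩ := leaf_nbr hT v2
      refine ⟨q, b, ?_, hstay _ _ hq (hnotR _ _ ?_ ?_ ?_ ?_ ?_ ?_), a2⟩
      · rintro rfl
        have := d1 hq
        omega
      · exact fun hh => n2b hh.1
      · exact fun hh => n2c hh.1
      · exact fun hh => n2b hh.1
      · exact fun hh => n2d hh.1
      · exact fun hh => n2b' hh.1
      · exact fun hh => e hh.1.symm
    exact absurd (leaf_drop2 hT htree n12 hv1 hv2 ht1 ht2 hkeep) (not_lt.mpr hc1)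

lemma freeEdge [Nontrivial V] (h : Ctx G T) (hK : K14Free G)
    (hC2 : ∀ T' : SimpleGraph V, T' ≤ G → T'.IsTree →
      (leafSet T').card = (leafSet T).card → rstemCard T' ≤ rstemCard T)
    {b b' p p' v w : V} (hb : 3 ≤ T.degree b) (hb' : 3 ≤ T.degree b') (hne : b ≠ b')
    (hnb : ∀ w, w ≠ b → w ≠ b' → T.dist b w + T.dist w b' = T.dist b b' → ¬ 3 ≤ T.degree w)
    (hbp : T.Adj b p) (hpb' : T.dist b' p < T.dist b' b)
    (hbp' : T.Adj b' p') (hpb : T.dist b p' < T.dist b b')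
    (hv : ¬ Two T v) (hw : ¬ Two T w)
    (ov : IsObliqueNbr G T s(b, p) v) (ow : IsObliqueNbr G T s(b', p') w) : False := by
  have key : ∀ {b p v : V}, 3 ≤ T.degree b → T.Adj b p → ¬ Two T v → IsObliqueNbr G T s(b, p) v →
      T.dist v p < T.dist v b ∧ G.Adj v b := by
    intro b p v hb hbp hv ho
    obtain ⟨x, y, he, hd, hG⟩ := ho
    rw [Sym2.eq_iff] at he
    rcases he with ⟨rfl, rfl⟩ | ⟨rfl, rfl⟩
    · exact (lemmaA h hb hbp hv hd hG).elim
    · exact ⟨hd, hG⟩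
  obtain ⟨k1, k2⟩ := key hb hbp hv ov
  obtain ⟨k3, k4⟩ := key hb' hbp' hw ow
  refine lemmaE h hK hC2 hb hb' hne hbp hpb' hw hv k4 k2 ?_ ?_
  · refine beyond h.tree hb' hb hne.symm ?_ hbp' hpb hw k3
    intro x hx hx' hd
    refine hnb x hx' hx ?_
    have := T.dist_comm (u := b) (v := x)
    have := T.dist_comm (u := b') (v := x)
    have := T.dist_comm (u := b) (v := b')
    omega
  · exact beyond h.tree hb hb' hne hnb hbp hpb' hv k1

lemma cut_adj {F : Finset (Sym2 V)} {x y : V} :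
    (swp T F ∅).Adj x y ↔ T.Adj x y ∧ s(x, y) ∉ F := by
  rw [swp_adj]; simp

lemma cut_split {F : Finset (Sym2 V)} {a b x y : V} (h : (swp T F ∅).Reachable x y) :
    (swp T (insert s(a, b) F) ∅).Reachable x y ∨
    ((swp T (insert s(a, b) F) ∅).Reachable x a ∧ (swp T (insert s(a, b) F) ∅).Reachable b y) ∨
    ((swp T (insert s(a, b) F) ∅).Reachable x b ∧ (swp T (insert s(a, b) F) ∅).Reachable a y) := by
  obtain ⟨w⟩ := h
  induction w with
  | nil => exact Or.inl (Reachable.refl _)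
  | @cons u v y huv w ih =>
    by_cases he : s(u, v) = s(a, b)
    · rw [Sym2.eq_iff] at he
      rcases he with ⟨rfl, rfl⟩ | ⟨rfl, rfl⟩
      · rcases ih with h1 | ⟨h1, h2⟩ | ⟨h1, h2⟩
        · exact Or.inr (Or.inl ⟨Reachable.refl _, h1⟩)
        · exact Or.inr (Or.inl ⟨Reachable.refl _, h2⟩)
        · exact Or.inl h2
      · rcases ih with h1 | ⟨h1, h2⟩ | ⟨h1, h2⟩
        · exact Or.inr (Or.inr ⟨Reachable.refl _, h1⟩)
        · exact Or.inl h2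
        · exact Or.inr (Or.inr ⟨Reachable.refl _, h2⟩)
    · have hadj : (swp T (insert s(a, b) F) ∅).Adj u v := by
        rw [cut_adj] at huv ⊢
        refine ⟨huv.1, ?_⟩
        rw [Finset.mem_insert]
        rintro (h1 | h1)
        · exact he h1
        · exact huv.2 h1
      rcases ih with h1 | ⟨h1, h2⟩ | ⟨h1, h2⟩
      · exact Or.inl (hadj.reachable.trans h1)
      · exact Or.inr (Or.inl ⟨hadj.reachable.trans h1, h2⟩)
      · exact Or.inr (Or.inr ⟨hadj.reachable.trans h1, h2⟩)

lemma comp_count (hT : T.IsTree) (F : Finset (Sym2 V)) : ∀ X : Finset V,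
    (∀ x ∈ X, ∀ y ∈ X, x ≠ y → ¬ (swp T F ∅).Reachable x y) → X.card ≤ F.card + 1 := by
  induction F using Finset.induction_on with
  | empty =>
    intro X hX
    rw [Finset.card_empty, zero_add, Finset.card_le_one]
    intro x hx y hy
    by_contra hne
    exact hX x hx y hy hne (swp_geo hT x y (by simp))
  | insert e F he ih =>
    intro X hX
    rw [Finset.card_insert_of_notMem he]
    induction e with
    | _ a b =>
    by_cases hex : ∃ x ∈ X, ∃ y ∈ X, x ≠ y ∧ (swp T F ∅).Reachable x y
    · obtain ⟨x, hx, y, hy, hxy, hr⟩ := hex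
      have hcard := Finset.card_erase_add_one hx
      have := ih (X.erase x) (by
        intro u hu w hw huw hr2
        rw [Finset.mem_erase] at hu hw
        have k1 := hX x hx u hu.2 hu.1.symm
        have k2 := hX x hx w hw.2 hw.1.symm
        rcases cut_split (a := a) (b := b) hr with h1 | ⟨h1, h2⟩ | ⟨h1, h2⟩
        · exact hX x hx y hy hxy h1
        · rcases cut_split (a := a) (b := b) hr2 with g1 | ⟨g1, g2⟩ | ⟨g1, g2⟩
          · exact hX u hu.2 w hw.2 huw g1
          · exact k1 (h1.trans g1.symm)
          · exact k2 (h1.trans g2)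
        · rcases cut_split (a := a) (b := b) hr2 with g1 | ⟨g1, g2⟩ | ⟨g1, g2⟩
          · exact hX u hu.2 w hw.2 huw g1
          · exact k2 (h1.trans g2)
          · exact k1 (h1.trans g1.symm))
      omega
    · have := ih X (fun x hx y hy hxy hr => hex ⟨x, hx, y, hy, hxy, hr⟩)
      omega

lemma same_side (hT : T.IsTree) {F : Finset (Sym2 V)} {u w x y : V}
    (h : (swp T F ∅).Reachable u w) (hF : s(x, y) ∈ F) (hxy : T.Adj x y)
    (hd : T.dist u x < T.dist u y) : T.dist w x < T.dist w y := by
  obtain ⟨p⟩ := h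
  induction p with
  | nil => exact hd
  | @cons u v w huv p ih =>
    apply ih
    rw [cut_adj] at huv
    by_contra hcon
    have h2 : T.dist v y < T.dist v x := by
      rcases dstep hT v hxy with h' | h' <;> omega
    obtain ⟨rfl, rfl⟩ := crossing hT hxy huv.1 hd h2
    exact huv.2 hF

lemma branch_sep [Nontrivial V] (h : Ctx G T) (hK : K14Free G)
    (hC2 : ∀ T' : SimpleGraph V, T' ≤ G → T'.IsTree →
      (leafSet T').card = (leafSet T).card → rstemCard T' ≤ rstemCard T)
    {F : Finset (Sym2 V)} (S : Finset V) (hS : ∀ v ∈ S, ¬ Two T v)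
    (hFT : ∀ e ∈ F, e ∈ T.edgeSet)
    (hF : ∀ e ∈ T.edgeSet, e ∉ F → ∃ v ∈ S, IsObliqueNbr G T e v) :
    ∀ (n : ℕ) (b b' : V), T.dist b b' = n → 3 ≤ T.degree b → 3 ≤ T.degree b' → b ≠ b' →
      ¬ (swp T F ∅).Reachable b b' := by
  have hT := h.tree
  have cm : ∀ x y, T.dist x y = T.dist y x := fun x y => T.dist_comm
  intro n
  induction n using Nat.strong_induction_on with
  | _ n ih =>
  intro b b' hn hb hb' hne hr
  have hend : ∀ {b b' p : V}, T.Adj b p → T.dist b' p < T.dist b' b →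
      (swp T F ∅).Reachable b b' → ∃ v ∈ S, IsObliqueNbr G T s(b, p) v := by
    intro b b' p hbp hd hr
    refine hF _ hbp ?_
    intro hmem
    have := same_side hT hr hmem hbp (by rw [dist_self]; exact dpos hT hbp.ne)
    omega
  obtain ⟨p, hp, hdp⟩ := ex_toward hT hne.symm
  obtain ⟨p', hp', hdp'⟩ := ex_toward hT hne
  obtain ⟨v, hv, ov⟩ := hend hp (by omega) hr
  obtain ⟨w, hw, ow⟩ := hend hp' (by omega) hr.symm
  refine freeEdge h hK hC2 hb hb' hne ?_ hp (by omega) hp' (by omega) (hS v hv) (hS w hw) ov ow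
  intro w hwb hwb' hd hw3
  have := dpos hT hwb'
  refine ih (T.dist b w) (by omega) b w rfl hb hw3 hwb.symm ?_
  have key : ∀ x y, T.Adj x y → s(x, y) ∈ F → T.dist b x < T.dist b y →
      ∃ t ∈ s(x, y), T.dist b t + T.dist t w ≠ T.dist b w := by
    intro x y hxy hmem hlt
    by_contra hcon
    push Not at hcon
    have e1 := hcon x (by simp)
    have e2 := hcon y (by simp)
    have := same_side hT hr hmem hxy hlt
    have t1 := dtri hT x w b'
    have t2 := dtri hT y w b'
    have t3 := dtri hT b x b'
    have t4 := dtri hT b y b'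
    have := cm b' x
    have := cm b' y
    omega
  apply swp_geo hT
  intro e
  induction e with
  | _ x y =>
    intro he
    have hxy : T.Adj x y := hFT _ he
    rcases dstep hT b hxy with h' | h'
    · have he' : s(y, x) ∈ F := by rw [Sym2.eq_swap]; exact he
      rw [Sym2.eq_swap]
      exact key y x hxy.symm he' (by omega)
    · exact key x y hxy he (by omega)

lemma leaf_count [Nontrivial V] (hT : T.IsTree) :
    (leafSet T).card = 2 + ∑ v, (T.degree v - 2) := by
  have h1 := T.sum_degrees_eq_twice_card_edges
  have h2 := hT.card_edgeFinset
  have h3 : ∑ v, (T.degree v + if T.degree v = 1 then 1 else 0) = ∑ v : V, (2 + (T.degree v - 2)) := by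
    apply Finset.sum_congr rfl
    intro v _
    have := hT.connected.preconnected.degree_pos_of_nontrivial v
    split_ifs <;> omega
  rw [Finset.sum_add_distrib, Finset.sum_add_distrib, ← Finset.card_filter, Finset.sum_const,
    Finset.card_univ, smul_eq_mul] at h3
  unfold leafSet
  omega

lemma branch_count : (branchSet T).card ≤ ∑ v, (T.degree v - 2) := by
  unfold branchSet
  rw [Finset.card_filter]
  apply Finset.sum_le_sum
  intro v _
  split_ifs <;> omega

lemma final (k m : ℕ) (hm : m ≤ k + 1) (hK : K14Free G)
    (hno : ¬ ∃ T' : SimpleGraph V, T' ≤ G ∧ T'.IsTree ∧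
      (leafSet T').card + (branchSet T').card ≤ m + k + 2)
    (h : Ctx G T)
    (hC2 : ∀ T' : SimpleGraph V, T' ≤ G → T'.IsTree →
      (leafSet T').card = (leafSet T).card → rstemCard T' ≤ rstemCard T) :
    ∃ S : Finset V, IsIndepFinset G S ∧ S.card = m + 2 ∧
      k ≤ {e | e ∈ T.edgeSet ∧ ∀ v ∈ S, ¬ IsObliqueNbr G T e v}.ncard := by
  have hT := h.tree
  have hbig : m + k + 3 ≤ (leafSet T).card + (branchSet T).card := by
    by_contra hcon
    exact hno ⟨T, h.le, hT, by omega⟩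
  have hnt : Nontrivial V := by
    by_contra hcon
    rw [not_nontrivial_iff_subsingleton] at hcon
    have h0 : ∀ v, T.degree v = 0 := by
      intro v
      by_contra h0
      obtain ⟨w, hw⟩ := (T.degree_pos_iff_exists_adj v).mp (by omega)
      exact hw.ne (Subsingleton.elim _ _)
    have e1 : (leafSet T) = ∅ := by simp [leafSet, h0]
    have e2 : (branchSet T) = ∅ := by simp [branchSet, h0]
    rw [e1, e2] at hbig
    simp at hbig
  have hl := leaf_count hT
  have hbc := branch_count (T := T)
  have hbne : (branchSet T).Nonempty := by
    rw [Finset.nonempty_iff_ne_empty]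
    intro he
    have hs : ∑ v, (T.degree v - 2) = 0 := by
      apply Finset.sum_eq_zero
      intro v _
      by_contra hv
      have : v ∈ branchSet T := by simp [branchSet]; omega
      rw [he] at this
      simp at this
    rw [he, Finset.card_empty] at hbig
    omega
  obtain ⟨b0, hb0⟩ := hbne
  have hb0' : 3 ≤ T.degree b0 := by simpa [branchSet] using hb0
  obtain ⟨S, hSL, hSc⟩ := Finset.exists_subset_card_eq (show m + 2 ≤ (leafSet T).card by omega)
  have hS : ∀ v ∈ S, ¬ Two T v := fun v hv => (leaf_iff hT).mp (hSL hv)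
  refine ⟨S, fun u hu v hv _ hG => lemmaB h hb0' (hS u hu) (hS v hv) hG, hSc, ?_⟩
  set F : Finset (Sym2 V) :=
    T.edgeFinset.filter (fun e => ∀ v ∈ S, ¬ IsObliqueNbr G T e v) with hFdef
  have hset : {e | e ∈ T.edgeSet ∧ ∀ v ∈ S, ¬ IsObliqueNbr G T e v} = (F : Set (Sym2 V)) := by
    ext e; simp [hFdef]
  rw [hset, Set.ncard_coe_finset]
  have hFT : ∀ e ∈ F, e ∈ T.edgeSet := by
    intro e he
    rw [hFdef, Finset.mem_filter, mem_edgeFinset] at he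
    exact he.1
  have hF : ∀ e ∈ T.edgeSet, e ∉ F → ∃ v ∈ S, IsObliqueNbr G T e v := by
    intro e he hn
    by_contra hcon
    push Not at hcon
    exact hn (by rw [hFdef, Finset.mem_filter, mem_edgeFinset]; exact ⟨he, hcon⟩)
  -- leaves outside S are isolated
  have hiso : ∀ x, ¬ Two T x → x ∉ S → ∀ y, ¬ (swp T F ∅).Adj x y := by
    intro x hx hxS y hxy
    rw [cut_adj] at hxy
    obtain ⟨v, hv, a, c, he, hd, hG⟩ := hF _ hxy.1 hxy.2
    rw [Sym2.eq_iff] at he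
    rcases he with ⟨rfl, rfl⟩ | ⟨rfl, rfl⟩
    · have hvx : v ≠ x := by rintro rfl; exact hxS hv
      obtain ⟨t, ht, hdt⟩ := ex_toward hT hvx
      refine hx ⟨t, y, ?_, ht, hxy.1⟩
      rintro rfl
      omega
    · exact lemmaB h hb0' (hS v hv) hx hG
  have hisoR : ∀ x, ¬ Two T x → x ∉ S → ∀ y, (swp T F ∅).Reachable x y → x = y := by
    intro x hx hxS y hr
    obtain ⟨w⟩ := hr
    cases w with
    | nil => rfl
    | cons ha _ => exact (hiso x hx hxS _ ha).elim
  have hX := comp_count hT F (branchSet T ∪ (leafSet T \ S)) (by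
    intro x hx y hy hne hr
    rw [Finset.mem_union, Finset.mem_sdiff, leaf_iff hT] at hx hy
    rcases hx with hx | hx
    · rcases hy with hy | hy
      · refine branch_sep h hK hC2 S hS hFT hF _ x y rfl ?_ ?_ hne hr
        · simpa [branchSet] using hx
        · simpa [branchSet] using hy
      · exact hne (hisoR y hy.1 hy.2 x hr.symm).symm
    · exact hne (hisoR x hx.1 hx.2 y hr))
  have hdis : Disjoint (branchSet T) (leafSet T \ S) := by
    rw [Finset.disjoint_left]
    intro x hx hx'
    rw [Finset.mem_sdiff, leaf_iff hT] at hx'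
    exact hx'.1 (branch_two (by simpa [branchSet] using hx))
  rw [Finset.card_union_of_disjoint hdis, Finset.card_sdiff_of_subset hSL] at hX
  omega

end lemmas
end Stmt15

/-- Let `m ≤ k+1`, let `G` be a connected `K_{1,4}`-free graph having no
spanning tree `T'` with `|L(T')| + |B(T')| ≤ m+k+2`, and let `T` be a spanning tree of `G`
chosen so that (C1) `|L(T)|` is minimum and (C2) `|V(R_Stem(T))|` is maximum subject to
(C1). Then there is an independent set `S` of `G` with `|S| = m+2` such that at least `k`
distinct edges of `T` have no oblique neighbor in `S` with respect to `T`. -/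
theorem stmt15 {V : Type*} [Fintype V] (k m : ℕ) (hm : m ≤ k + 1)
    (G : SimpleGraph V) (hG : G.Connected) (hK : K14Free G)
    (hno : ¬ ∃ T' : SimpleGraph V, T' ≤ G ∧ T'.IsTree ∧
      (leafSet T').card + (branchSet T').card ≤ m + k + 2)
    (T : SimpleGraph V) (hT : T ≤ G) (hTree : T.IsTree)
    (hC1 : ∀ T' : SimpleGraph V, T' ≤ G → T'.IsTree →
      (leafSet T).card ≤ (leafSet T').card)
    (hC2 : ∀ T' : SimpleGraph V, T' ≤ G → T'.IsTree →
      (leafSet T').card = (leafSet T).card → rstemCard T' ≤ rstemCard T) :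
    ∃ S : Finset V, IsIndepFinset G S ∧ S.card = m + 2 ∧
      k ≤ {e | e ∈ T.edgeSet ∧ ∀ v ∈ S, ¬ IsObliqueNbr G T e v}.ncard := by
  exact Stmt15.final k m hm hK hno ⟨hT, hTree, hC1⟩ hC2
end

section
/- Let G be a connected finite simple graph, let T be a spanning tree of G, and let v be a vertex of G. Then the number of edges e of T such that v is an oblique neighbor of e with respect to T equals the degree of v in G. (Indeed, for any vertices v, x of G, vx is an edge of G if and only if v is an oblique neighbor with respect to T of the edge of T joining x to its neighbor in T in the direction toward v.) -/
open SimpleGraph Finset List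

open scoped Classical

variable {V : Type*}

/-- A tree neighbor strictly closer to the root exists. -/
theorem exists_parent {V : Type*} (T : SimpleGraph V) (hT : T.IsTree) (v x : V) (h : v ≠ x) :
    ∃ a, T.Adj a x ∧ T.dist v a < T.dist v x := by
  obtain ⟨p, hp⟩ := hT.connected.exists_walk_length_eq_dist v x
  have hn : ¬ p.Nil := SimpleGraph.Walk.not_nil_of_ne h
  refine ⟨p.penultimate, p.adj_penultimate hn, ?_⟩
  have h1 := SimpleGraph.dist_le p.dropLast
  have h2 : 0 < p.length := by
    rw [hp]; exact hT.connected.pos_dist_of_ne h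
  have h3 : p.dropLast.length + 1 = p.length := by
    have := congrArg SimpleGraph.Walk.length (p.concat_dropLast (p.adj_penultimate hn))
    rwa [SimpleGraph.Walk.length_concat] at this
  omega

/-- A tree neighbor strictly closer to the root is unique. -/
theorem parent_unique {V : Type*} (T : SimpleGraph V) (hT : T.IsTree) (v x a b : V)
    (ha : T.Adj a x) (hb : T.Adj b x)
    (hda : T.dist v a < T.dist v x) (hdb : T.dist v b < T.dist v x) : a = b := by
  have key : ∀ c, T.Adj c x → T.dist v c < T.dist v x →
      ∃ p : T.Walk v x, p.IsPath ∧ p.penultimate = c := by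
    intro c hc hd
    obtain ⟨p, hp⟩ := hT.connected.exists_walk_length_eq_dist v c
    refine ⟨p.concat hc, ?_, by simp⟩
    apply SimpleGraph.Walk.isPath_of_length_eq_dist
    have := SimpleGraph.dist_le (p.concat hc)
    rw [SimpleGraph.Walk.length_concat] at *
    omega
  obtain ⟨p, hp, rfl⟩ := key a ha hda
  obtain ⟨q, hq, rfl⟩ := key b hb hdb
  rw [(hT.existsUnique_path v x).unique hp hq]

/-- For a spanning tree `T` of a connected graph `G` and any vertex `v`, the
number of edges of `T` having `v` as an oblique neighbor with respect to `T` equals the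
degree of `v` in `G`. -/
theorem stmt16 {V : Type*} [Fintype V] (G T : SimpleGraph V) (hG : G.Connected)
    (hT : T ≤ G) (hTree : T.IsTree) (v : V) :
    {e | e ∈ T.edgeSet ∧ IsObliqueNbr G T e v}.ncard = G.degree v := by
  have hex : ∀ x, ∃ a, v ≠ x → T.Adj a x ∧ T.dist v a < T.dist v x := by
    intro x
    by_cases h : v = x
    · exact ⟨v, fun h' => absurd h h'⟩
    · obtain ⟨a, ha⟩ := exists_parent T hTree v x h
      exact ⟨a, fun _ => ha⟩
  choose f hf using hex
  have himg : {e | e ∈ T.edgeSet ∧ IsObliqueNbr G T e v}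
      = (fun x => s(f x, x)) '' (G.neighborFinset v : Set V) := by
    ext e
    constructor
    · rintro ⟨he, a, b, rfl, hd, hadj⟩
      refine ⟨b, by simpa using hadj, ?_⟩
      obtain ⟨h1, h2⟩ := hf b hadj.ne
      have := parent_unique T hTree v b (f b) a h1 he h2 hd
      simp [this]
    · rintro ⟨x, hx, rfl⟩
      have hadj : G.Adj v x := by simpa using hx
      obtain ⟨h1, h2⟩ := hf x hadj.ne
      exact ⟨h1, f x, x, rfl, h2, hadj⟩
  rw [himg, Set.ncard_image_of_injOn, Set.ncard_coe_finset, SimpleGraph.card_neighborFinset_eq_degree]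
  intro x hx y hy hxy
  have hx' : G.Adj v x := by simpa using hx
  have hy' : G.Adj v y := by simpa using hy
  obtain ⟨-, h2⟩ := hf x hx'.ne
  obtain ⟨-, h3⟩ := hf y hy'.ne
  rcases Sym2.eq_iff.1 hxy with h | h
  · exact h.2
  · rw [h.1] at h2
    rw [← h.2] at h3
    omega
end
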